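/- arXiv:1812.05580 — 3 statements merged into one kernel-verified Lean document; each statement's English description precedes it below -/
import Mathlib

section
/- For every complex number q with |q| < 1, the sum over all nonnegative integers j of q^(j^2+j) / ((q;q)_j) equals the product over all positive integers j with j not congruent to 0, 1, or -1 modulo 5 of 1/(1 - q^j). Here (a;q)_j denotes the finite q-Pochhammer symbol ∏_{h=0}^{j-1} (1 - a q^h), with (a;q)_0 = 1. -/
/-- The finite q-Pochhammer symbol `(a; q)_n = ∏_{h=0}^{n-1} (1 - a q^h)`. -/
noncomputable def qPoch (a q : ℂ) (n : ℕ) : ℂ := ∏ h ∈ Finset.range n, (1 - a * q ^ h)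

namespace RR
open Filter Topology

/-- `1/(q;q)_n`, extended by zero to negative integers. -/
noncomputable def rf (q : ℂ) (n : ℤ) : ℂ := if n < 0 then 0 else (qPoch q q n.toNat)⁻¹

lemma rf_neg (q : ℂ) {n : ℤ} (h : n < 0) : rf q n = 0 := by simp [rf, h]

lemma rf_nat (q : ℂ) (n : ℕ) : rf q n = (qPoch q q n)⁻¹ := by simp [rf]

lemma rf_zero (q : ℂ) : rf q 0 = 1 := by simp [rf, qPoch]

lemma one_sub_ne {q : ℂ} (hq : ‖q‖ < 1) {n : ℕ} (hn : n ≠ 0) : 1 - q ^ n ≠ 0 := by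
  intro h
  have h1 : q ^ n = 1 := (sub_eq_zero.mp h).symm
  have h2 : ‖q‖ ^ n = 1 := by rw [← norm_pow, h1, norm_one]
  have := pow_lt_one₀ (norm_nonneg q) hq hn
  linarith

lemma one_sub_zne {q : ℂ} (hq : ‖q‖ < 1) {n : ℤ} (hn : 0 < n) : 1 - q ^ n ≠ 0 := by
  lift n to ℕ using hn.le
  rw [zpow_natCast]
  exact one_sub_ne hq (by omega)

lemma qPoch_succ (q : ℂ) (n : ℕ) : qPoch q q (n + 1) = qPoch q q n * (1 - q ^ (n + 1)) := by
  simp [qPoch, Finset.prod_range_succ, pow_succ, mul_comm]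

lemma qPoch_ne {q : ℂ} (hq : ‖q‖ < 1) (n : ℕ) : qPoch q q n ≠ 0 := by
  induction n with
  | zero => simp [qPoch]
  | succ n ih => rw [qPoch_succ]; exact mul_ne_zero ih (one_sub_ne hq (by omega))

lemma rf_rec {q : ℂ} (hq : ‖q‖ < 1) (n : ℤ) : rf q (n - 1) = (1 - q ^ n) * rf q n := by
  rcases lt_trichotomy n 0 with h | h | h
  · rw [rf_neg q h, rf_neg q (by omega), mul_zero]
  · subst h; rw [rf_neg q (by omega)]; simp
  · obtain ⟨m, rfl⟩ : ∃ m : ℕ, n = ((m + 1 : ℕ) : ℤ) := ⟨(n - 1).toNat, by omega⟩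
    have e : ((m + 1 : ℕ) : ℤ) - 1 = (m : ℤ) := by push_cast; ring
    rw [e, rf_nat, rf_nat, zpow_natCast, qPoch_succ]
    have := one_sub_ne hq (n := m + 1) (by omega)
    have := qPoch_ne hq m
    field_simp

lemma summable_supp {f : ℤ → ℂ} (a b : ℤ) (h : ∀ k, k < a ∨ b < k → f k = 0) : Summable f := by
  apply summable_of_ne_finset_zero (s := Finset.Icc a b)
  intro k hk
  apply h
  rw [Finset.mem_Icc] at hk
  omega

/-- Triangular exponents. -/
def T (r : ℤ) : ℤ := r * (r - 1) / 2

lemma two_T (r : ℤ) : 2 * T r = r * (r - 1) := by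
  unfold T
  apply Int.mul_ediv_cancel'
  rcases Int.even_or_odd' r with ⟨k, rfl | rfl⟩
  · exact ⟨k * (2 * k - 1), by ring⟩
  · exact ⟨(2 * k + 1) * k, by ring⟩

lemma T_succ (r : ℤ) : T (r + 1) = T r + r := by
  have h1 := two_T r
  have h2 := two_T (r + 1)
  linarith [show (r+1)*(r+1-1) = r * (r-1) + 2 * r by ring]

/-- q-Vandermonde. -/
lemma vand {q : ℂ} (hq : ‖q‖ < 1) (h0 : q ≠ 0) (A : ℕ) : ∀ m : ℤ,
    ∑' k : ℤ, q ^ (k * (k + m)) * rf q (A - k) * rf q k * rf q (k + m) = rf q A * rf q (A + m) := by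
  induction A with
  | zero =>
    intro m
    rw [tsum_eq_single 0]
    · simp [rf_zero]
    · intro k hk
      rcases lt_or_gt_of_ne hk with h | h
      · rw [rf_neg q h]; simp
      · rw [rf_neg q (n := ((0 : ℕ) : ℤ) - k) (by push_cast; omega)]; simp
  | succ A ih =>
    intro m
    have hne : (1 - q ^ ((A : ℤ) + 1)) ≠ 0 := one_sub_zne hq (by omega)
    apply mul_left_cancel₀ hne
    rw [← tsum_mul_left]
    have key : ∀ k : ℤ, (1 - q ^ ((A : ℤ) + 1)) *
        (q ^ (k * (k + m)) * rf q (((A + 1 : ℕ) : ℤ) - k) * rf q k * rf q (k + m)) =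
        q ^ (k * (k + m)) * rf q (A - k) * rf q k * rf q (k + m) +
        q ^ (k * (k + m) + (A + 1 - k)) * rf q (A + 1 - k) * rf q (k - 1) * rf q (k + m) := by
      intro k
      have e1 := rf_rec hq ((A : ℤ) + 1 - k)
      have e2 := rf_rec hq k
      rw [show (A : ℤ) + 1 - k - 1 = A - k by ring] at e1
      have e3 : q ^ ((A : ℤ) + 1) = q ^ ((A : ℤ) + 1 - k) * q ^ k := by
        rw [← zpow_add₀ h0]; congr 1; ring
      rw [e1, e2, e3, zpow_add₀ h0 (k * (k + m))]
      push_cast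
      ring
    rw [tsum_congr key, Summable.tsum_add]
    · rw [ih m, ← (Equiv.addRight (1 : ℤ)).tsum_eq]
      have k2 : ∀ k : ℤ, q ^ ((Equiv.addRight (1 : ℤ)) k * ((Equiv.addRight (1 : ℤ)) k + m) +
          (A + 1 - (Equiv.addRight (1 : ℤ)) k)) * rf q (A + 1 - (Equiv.addRight (1 : ℤ)) k) *
          rf q ((Equiv.addRight (1 : ℤ)) k - 1) * rf q ((Equiv.addRight (1 : ℤ)) k + m) =
          q ^ (A + 1 + m) * (q ^ (k * (k + (m + 1))) * rf q (A - k) * rf q k * rf q (k + (m + 1))) := by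
        intro k
        simp only [Equiv.coe_addRight]
        rw [show (k + 1) * (k + 1 + m) + ((A : ℤ) + 1 - (k + 1)) = (A + 1 + m) + k * (k + (m + 1)) by ring,
          zpow_add₀ h0 (A + 1 + m), show (A : ℤ) + 1 - (k + 1) = A - k by ring,
          show k + 1 - 1 = k by ring, show k + 1 + m = k + (m + 1) by ring]
        ring
      rw [tsum_congr k2, tsum_mul_left, ih (m + 1)]
      have e1 := rf_rec hq ((A : ℤ) + 1 + m)
      have e2 := rf_rec hq ((A : ℤ) + 1)
      rw [show (A : ℤ) + 1 + m - 1 = A + m by ring] at e1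
      rw [show (A : ℤ) + 1 - 1 = A by ring] at e2
      rw [e1, e2, show (A : ℤ) + (m + 1) = A + 1 + m by ring]
      push_cast
      ring
    · apply summable_supp 0 A
      rintro k (h | h)
      · rw [rf_neg q h]; simp
      · rw [rf_neg q (n := (A : ℤ) - k) (by omega)]; simp
    · apply summable_supp 1 (A + 1)
      rintro k (h | h)
      · rw [rf_neg q (n := k - 1) (by omega)]; simp
      · rw [rf_neg q (n := (A : ℤ) + 1 - k) (by omega)]; simp

lemma vand' {q : ℂ} (hq : ‖q‖ < 1) (h0 : q ≠ 0) (N r : ℤ) :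
    ∑' L : ℤ, q ^ (L ^ 2 + L) * rf q (N - L) * rf q (L - r) * rf q (L + r + 1) =
      q ^ (r ^ 2 + r) * rf q (N - r) * rf q (N + r + 1) := by
  rcases lt_or_ge (N - r) 0 with h | h
  · rw [rf_neg q h, mul_zero, zero_mul]
    convert tsum_zero with L
    rcases lt_or_ge L r with h' | h'
    · rw [rf_neg q (n := L - r) (by omega)]; simp
    · rw [rf_neg q (n := N - L) (by omega)]; simp
  · obtain ⟨A, hA⟩ := Int.eq_ofNat_of_zero_le h
    have hv := vand hq h0 A (2 * r + 1)
    rw [← (Equiv.addRight r).tsum_eq]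
    simp only [Equiv.coe_addRight]
    have : ∀ k : ℤ, q ^ ((k + r) ^ 2 + (k + r)) * rf q (N - (k + r)) * rf q (k + r - r) *
        rf q (k + r + r + 1) = q ^ (r ^ 2 + r) * (q ^ (k * (k + (2 * r + 1))) * rf q (A - k) * rf q k
          * rf q (k + (2 * r + 1))) := by
      intro k
      rw [show (k + r) ^ 2 + (k + r) = (r ^ 2 + r) + k * (k + (2 * r + 1)) by ring, zpow_add₀ h0 (r ^ 2 + r),
        show N - (k + r) = A - k by rw [← hA]; ring, show k + r - r = k by ring,
        show k + r + r + 1 = k + (2 * r + 1) by ring]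
      ring
    rw [tsum_congr this, tsum_mul_left, hv, hA, show N + r + 1 = A + (2 * r + 1) by rw [← hA]; ring]
    ring

/-- Finite Jacobi triple sums. -/
noncomputable def P (q z : ℂ) (A B : ℤ) : ℂ :=
  ∑' r : ℤ, (-z) ^ r * q ^ T r * rf q (A - r) * rf q (B + r)

lemma P_zero (q z : ℂ) : P q z 0 0 = 1 := by
  unfold P
  rw [tsum_eq_single 0]
  · simp [rf_zero, T]
  · intro k hk
    rcases lt_or_gt_of_ne hk with h | h
    · rw [rf_neg q (n := 0 + k) (by omega)]; simp
    · rw [rf_neg q (n := 0 - k) (by omega)]; simp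

lemma P_A {q z : ℂ} (hq : ‖q‖ < 1) (h0 : q ≠ 0) (hz : z ≠ 0) (A B : ℤ) :
    (1 - q ^ (A + B)) * P q z A B = (1 - z * q ^ (A - 1)) * P q z (A - 1) B := by
  unfold P
  rw [← tsum_mul_left]
  have key : ∀ r : ℤ, (1 - q ^ (A + B)) * ((-z) ^ r * q ^ T r * rf q (A - r) * rf q (B + r)) =
      (-z) ^ r * q ^ T r * rf q (A - 1 - r) * rf q (B + r) +
      (-z) ^ r * q ^ (T r + (A - r)) * rf q (A - r) * rf q (B + r - 1) := by
    intro r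
    have e1 := rf_rec hq (A - r)
    have e2 := rf_rec hq (B + r)
    rw [show A - 1 - r = A - r - 1 by ring, e1, e2,
      show A + B = (A - r) + (B + r) by ring, zpow_add₀ h0, zpow_add₀ h0 (T r)]
    ring
  rw [tsum_congr key, Summable.tsum_add]
  · conv_lhs => rw [← (Equiv.addRight (1 : ℤ)).tsum_eq (fun r => (-z) ^ r * q ^ (T r + (A - r)) * rf q (A - r) * rf q (B + r - 1))]
    have k2 : ∀ r : ℤ, (-z) ^ (r + 1) * q ^ (T (r + 1) + (A - (r + 1))) * rf q (A - (r + 1)) * rf q (B + (r + 1) - 1)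
       = (- z * q ^ (A - 1)) * ((-z) ^ r * q ^ T r * rf q (A - 1 - r) * rf q (B + r)) := by
      intro r
      rw [T_succ, show T r + r + (A - (r + 1)) = T r + (A - 1) by ring, zpow_add₀ h0 (T r),
        zpow_add₀ (neg_ne_zero.mpr hz), show A - (r + 1) = A - 1 - r by ring,
        show B + (r + 1) - 1 = B + r by ring, zpow_one]
      ring
    simp only [Equiv.coe_addRight]
    rw [tsum_congr k2, tsum_mul_left]
    ring
  · apply summable_supp (-B) (A - 1)
    rintro k (h | h)
    · rw [rf_neg q (n := B + k) (by omega)]; simp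
    · rw [rf_neg q (n := A - 1 - k) (by omega)]; simp
  · apply summable_supp (-B + 1) A
    rintro k (h | h)
    · rw [rf_neg q (n := B + k - 1) (by omega)]; simp
    · rw [rf_neg q (n := A - k) (by omega)]; simp

lemma P_shift {q z : ℂ} (h0 : q ≠ 0) (hz : z ≠ 0) (A B : ℤ) :
    P q z A B = -z * P q (z * q) (A - 1) (B + 1) := by
  unfold P
  rw [← tsum_mul_left, ← (Equiv.addRight (1 : ℤ)).tsum_eq]
  apply tsum_congr
  intro r
  simp only [Equiv.coe_addRight]
  rw [T_succ, zpow_add₀ h0, zpow_add₀ (neg_ne_zero.mpr hz), show A - (r + 1) = A - 1 - r by ring,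
        show B + (r + 1) = B + 1 + r by ring, zpow_one, ← neg_mul, mul_zpow]
  ring

lemma T_neg (r : ℤ) : T (-r) = T r + r := by
  have h1 := two_T r
  have h2 := two_T (-r)
  linarith [show (-r)*(-r-1) = r * (r-1) + 2 * r by ring]

lemma P_symm {q z : ℂ} (h0 : q ≠ 0) (hz : z ≠ 0) (A B : ℤ) : P q z A B = P q (q / z) B A := by
  unfold P
  rw [← (Equiv.neg ℤ).tsum_eq]
  apply tsum_congr
  intro r
  simp only [Equiv.neg_apply]
  rw [T_neg, zpow_add₀ h0, show A - -r = A + r by ring, show B + -r = B - r by ring,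
    show -(q / z) = (-z)⁻¹ * q by field_simp, mul_zpow, inv_zpow', zpow_neg]
  ring

lemma P_B {q z : ℂ} (hq : ‖q‖ < 1) (h0 : q ≠ 0) (hz : z ≠ 0) (A B : ℤ) :
    (1 - q ^ (A + B)) * P q z A B = (1 - q ^ B / z) * P q z A (B - 1) := by
  have h2 := P_A hq h0 (div_ne_zero h0 hz) B A
  rw [← P_symm h0 hz, ← P_symm h0 hz, add_comm B A] at h2
  rw [h2, show B = (B - 1) + 1 by ring, zpow_add₀ h0 (B - 1), zpow_one]
  ring_nf

lemma P_closed {q z : ℂ} (hq : ‖q‖ < 1) (h0 : q ≠ 0) (hz : z ≠ 0) (n : ℕ) :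
    P q z n n = rf q ((2 * n : ℕ) : ℤ) *
      ∏ i ∈ Finset.range n, ((1 - z * q ^ i) * (1 - q ^ (i + 1) / z)) := by
  induction n with
  | zero => simp [P_zero, rf_zero]
  | succ n ih =>
    have h1 := P_A hq h0 hz ((n : ℤ) + 1) (n + 1)
    have h2 := P_B hq h0 hz (n : ℤ) (n + 1)
    have e1 := rf_rec hq (2 * (n : ℤ) + 1)
    have e2 := rf_rec hq (2 * (n : ℤ) + 2)
    rw [show (n : ℤ) + 1 - 1 = n by ring, show (n : ℤ) + 1 + (n + 1) = 2 * n + 2 by ring] at h1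
    rw [show (n : ℤ) + 1 - 1 = n by ring, show (n : ℤ) + (n + 1) = 2 * n + 1 by ring, ih] at h2
    rw [show 2 * (n : ℤ) + 1 - 1 = 2 * n by ring] at e1
    rw [show 2 * (n : ℤ) + 2 - 1 = 2 * n + 1 by ring] at e2
    have n1 : 1 - q ^ (2 * (n : ℤ) + 1) ≠ 0 := one_sub_zne hq (by omega)
    have n2 : 1 - q ^ (2 * (n : ℤ) + 2) ≠ 0 := one_sub_zne hq (by omega)
    apply mul_left_cancel₀ n2
    apply mul_left_cancel₀ n1
    rw [Finset.prod_range_succ]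
    push_cast at h1 h2 ⊢
    rw [e1, e2] at h2
    rw [h1, show 2 * ((n : ℤ) + 1) = 2 * n + 2 by ring]
    rw [show (1 - q ^ (2 * (n : ℤ) + 1)) * ((1 - z * q ^ (n : ℤ)) * P q z n (n + 1)) =
      (1 - z * q ^ (n : ℤ)) * ((1 - q ^ (2 * (n : ℤ) + 1)) * P q z n (n + 1)) by ring, h2]
    rw [zpow_natCast, show q ^ ((n : ℤ) + 1) = q ^ (n + 1) by norm_cast]
    ring

lemma P_unit {q : ℂ} (hq : ‖q‖ < 1) (h0 : q ≠ 0) (N : ℤ) :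
    P q 1 N (N + 1) = if N = 0 then 1 else 0 := by
  have key : ∀ k : ℕ, ∀ B : ℤ, 0 ≤ B → P q 1 (k + 1) B = 0 := by
    intro k
    induction k with
    | zero =>
      intro B hB
      have h := P_A hq h0 one_ne_zero 1 B
      simp only [sub_self, zpow_zero, mul_one, zero_mul] at h
      simpa [one_sub_zne hq (show 0 < 1 + B by omega)] using h
    | succ k ih =>
      intro B hB
      have h := P_A hq h0 one_ne_zero ((k : ℤ) + 1 + 1) B
      rw [show (k : ℤ) + 1 + 1 - 1 = k + 1 by ring, ih B hB, mul_zero] at h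
      push_cast
      exact (mul_eq_zero.mp h).resolve_left (one_sub_zne hq (by omega))
  rcases lt_trichotomy N 0 with h | h | h
  · rw [if_neg h.ne]
    unfold P
    convert tsum_zero with r
    rcases lt_or_ge N r with h' | h'
    · rw [rf_neg q (n := N - r) (by omega)]; simp
    · rw [rf_neg q (n := N + 1 + r) (by omega)]; simp
  · subst h
    have h := P_B hq h0 one_ne_zero 0 1
    rw [sub_self, P_zero, div_one, zero_add] at h
    simpa using mul_left_cancel₀ (one_sub_zne hq (by omega)) h
  · rw [if_neg h.ne']
    have := key (N - 1).toNat (N + 1) (by omega)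
    rwa [show (((N - 1).toNat : ℕ) : ℤ) + 1 = N by omega] at this

/-- A finite form of the Bailey lemma. -/
lemma bailey {q : ℂ} (hq : ‖q‖ < 1) (h0 : q ≠ 0) (α : ℤ → ℂ) (N : ℤ) :
    ∑' L : ℤ, q ^ (L ^ 2 + L) * rf q (N - L) * (∑' r : ℤ, α r * rf q (L - r) * rf q (L + r + 1)) =
    ∑' r : ℤ, α r * q ^ (r ^ 2 + r) * rf q (N - r) * rf q (N + r + 1) := by
  have h1 : ∀ r : ℤ, α r * q ^ (r ^ 2 + r) * rf q (N - r) * rf q (N + r + 1) =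
      ∑' L : ℤ, α r * (q ^ (L ^ 2 + L) * rf q (N - L) * rf q (L - r) * rf q (L + r + 1)) := by
    intro r
    rw [tsum_mul_left, vand' hq h0]
    ring
  rw [tsum_congr h1]
  simp_rw [← tsum_mul_left]
  rw [Summable.tsum_comm]
  · apply tsum_congr; intro r
    apply tsum_congr; intro L
    ring
  · apply summable_of_ne_finset_zero (s := Finset.Icc (-N - 1) N ×ˢ Finset.Icc (-N - 1) N)
    rintro ⟨r, L⟩ hb
    simp only [Finset.mem_product, Finset.mem_Icc] at hb
    simp only [Function.uncurry]
    by_cases c1 : N < L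
    · rw [rf_neg q (n := N - L) (by omega)]; simp
    by_cases c2 : L < r
    · rw [rf_neg q (n := L - r) (by omega)]; simp
    · rw [rf_neg q (n := L + r + 1) (by omega)]; simp

lemma step1 {q : ℂ} (hq : ‖q‖ < 1) (h0 : q ≠ 0) (N : ℤ) :
    ∑' r : ℤ, ((-1) ^ r * q ^ T r) * q ^ (r ^ 2 + r) * rf q (N - r) * rf q (N + r + 1) = rf q N := by
  rw [← bailey hq h0]
  have : ∀ L : ℤ, ∑' r : ℤ, ((-1) ^ r * q ^ T r) * rf q (L - r) * rf q (L + r + 1) =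
      if L = 0 then 1 else 0 := by
    intro L
    rw [← P_unit hq h0]
    unfold P
    apply tsum_congr; intro r
    rw [show L + r + 1 = L + 1 + r by ring]
  simp_rw [this]
  rw [tsum_eq_single 0]
  · simp
  · intro L hL
    simp [hL]

lemma step2 {q : ℂ} (hq : ‖q‖ < 1) (h0 : q ≠ 0) (N : ℤ) :
    ∑' L : ℤ, q ^ (L ^ 2 + L) * rf q (N - L) * rf q L =
    ∑' r : ℤ, ((-1) ^ r * q ^ (5 * T r + 4 * r)) * rf q (N - r) * rf q (N + r + 1) := by
  have h := bailey hq h0 (fun r => ((-1) ^ r * q ^ T r) * q ^ (r ^ 2 + r)) N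
  simp_rw [step1 hq h0] at h
  rw [h]
  apply tsum_congr; intro r
  have e : 5 * T r + 4 * r = T r + (r ^ 2 + r) + (r ^ 2 + r) := by
    linarith [two_T r, show r * (r - 1) = r ^ 2 - r by ring]
  rw [e, zpow_add₀ h0 (T r + (r ^ 2 + r)), zpow_add₀ h0 (T r)]
  ring

lemma poch_lim {q : ℂ} (hq : ‖q‖ < 1) :
    ∃ c : ℂ, c ≠ 0 ∧ Tendsto (fun n : ℕ => qPoch q q n) atTop (𝓝 c) := by
  have hs : Summable (fun i : ℕ => ‖-q ^ (i + 1)‖) := by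
    simp only [norm_neg, norm_pow]
    exact (summable_nat_add_iff 1).mpr (summable_geometric_of_lt_one (norm_nonneg q) hq)
  refine ⟨∏' i : ℕ, (1 + -q ^ (i + 1)), ?_, ?_⟩
  · apply tprod_one_add_ne_zero_of_summable _ hs
    intro i
    rw [← sub_eq_add_neg]
    exact one_sub_ne hq (by omega)
  · have := (multipliable_one_add_of_summable hs).hasProd.tendsto_prod_nat
    convert this using 2 with n
    unfold qPoch
    apply Finset.prod_congr rfl
    intro i _
    rw [pow_succ]; ring

lemma rf_lim {q c : ℂ} (hc : c ≠ 0)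
    (h : Tendsto (fun n : ℕ => qPoch q q n) atTop (𝓝 c)) (k : ℤ) :
    Tendsto (fun n : ℕ => rf q (n + k)) atTop (𝓝 c⁻¹) := by
  have ht : Tendsto (fun n : ℕ => ((n : ℤ) + k).toNat) atTop atTop := by
    apply tendsto_atTop_mono (f := fun n => n - k.natAbs)
    · intro n; omega
    · exact tendsto_sub_atTop_nat _
  apply ((h.comp ht).inv₀ hc).congr'
  filter_upwards [eventually_ge_atTop k.natAbs] with n hn
  rw [rf, if_neg (by omega)]
  rfl

lemma rf_bdd {q c : ℂ} (hc : c ≠ 0)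
    (h : Tendsto (fun n : ℕ => qPoch q q n) atTop (𝓝 c)) : ∃ C : ℝ, 0 ≤ C ∧ ∀ n, ‖rf q n‖ ≤ C := by
  obtain ⟨C, hC⟩ := (Metric.isBounded_range_of_tendsto _ (rf_lim hc h 0)).exists_norm_le
  have h0 : 0 ≤ C := (norm_nonneg _).trans (hC _ ⟨0, rfl⟩)
  refine ⟨C, h0, fun n => ?_⟩
  rcases lt_or_ge n 0 with hn | hn
  · rw [rf_neg q hn, norm_zero]; exact h0
  · exact hC _ ⟨n.toNat, by simp [hn]⟩

lemma summ {q : ℂ} (hq : ‖q‖ < 1) (h0 : q ≠ 0) (e : ℤ → ℤ) (he : ∀ r, |r| - 1 ≤ e r) :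
    Summable (fun r => ‖q ^ e r‖) := by
  have hp : 0 < ‖q‖ := norm_pos_iff.mpr h0
  have hg : Summable (fun r : ℤ => ‖q‖ ^ (|r| - 1)) := by
    have h1 : Summable (fun n : ℕ => ‖q‖ ^ (|(n : ℤ)| - 1)) := by
      simp only [Nat.abs_cast, zpow_sub₀ hp.ne', zpow_natCast, zpow_one]
      exact (summable_geometric_of_lt_one (norm_nonneg q) hq).div_const _
    have h2 : Summable (fun n : ℕ => ‖q‖ ^ (|(-(n : ℤ))| - 1)) := by
      simpa only [abs_neg] using h1
    exact Summable.of_nat_of_neg (f := fun r : ℤ => ‖q‖ ^ (|r| - 1)) h1 h2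
  refine Summable.of_nonneg_of_le (fun _ => norm_nonneg _) (fun r => ?_) hg
  rw [norm_zpow]
  exact zpow_le_zpow_right_of_le_one₀ hp hq.le (he r)

lemma lim1 {q c : ℂ} (hc : c ≠ 0) (h : Tendsto (fun n : ℕ => qPoch q q n) atTop (𝓝 c))
    {a : ℤ → ℂ} (ha : Summable (fun r => ‖a r‖)) :
    Tendsto (fun n : ℕ => ∑' r : ℤ, a r * rf q (n - r)) atTop (𝓝 (∑' r, a r * c⁻¹)) := by
  obtain ⟨C, h0, hC⟩ := rf_bdd hc h
  apply tendsto_tsum_of_dominated_convergence (ha.mul_right C)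
  · intro r
    exact (rf_lim hc h (-r)).const_mul _
  · filter_upwards with n r
    rw [norm_mul]
    gcongr
    exact hC _

lemma lim2 {q c : ℂ} (hc : c ≠ 0) (h : Tendsto (fun n : ℕ => qPoch q q n) atTop (𝓝 c))
    {a : ℤ → ℂ} (ha : Summable (fun r => ‖a r‖)) (s : ℤ) :
    Tendsto (fun n : ℕ => ∑' r : ℤ, a r * rf q (n - r) * rf q (n + r + s)) atTop
      (𝓝 (∑' r, a r * c⁻¹ * c⁻¹)) := by
  obtain ⟨C, h0, hC⟩ := rf_bdd hc h
  apply tendsto_tsum_of_dominated_convergence ((ha.mul_right C).mul_right C)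
  · intro r
    have h2 := rf_lim hc h (r + s)
    simp only [← add_assoc] at h2
    exact ((rf_lim hc h (-r)).const_mul _).mul h2
  · filter_upwards with n r
    rw [norm_mul, norm_mul]
    gcongr
    · exact hC _
    · exact hC _

lemma exp1 (r : ℤ) : |r| - 1 ≤ r ^ 2 + r := by
  rcases abs_cases r with ⟨h, _⟩ | ⟨h, _⟩ <;> rw [h] <;> nlinarith [sq_nonneg (r + 1), sq_nonneg r]

lemma exp2 (r : ℤ) : |r| - 1 ≤ 5 * T r + 4 * r := by
  have := two_T r
  rcases abs_cases r with ⟨h, _⟩ | ⟨h, _⟩ <;> rw [h] <;> nlinarith [sq_nonneg (r + 1), sq_nonneg r]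

lemma main_sum {q c : ℂ} (hq : ‖q‖ < 1) (h0 : q ≠ 0) (hc : c ≠ 0)
    (h : Tendsto (fun n : ℕ => qPoch q q n) atTop (𝓝 c)) :
    ∑' L : ℤ, q ^ (L ^ 2 + L) * rf q L = (∑' r : ℤ, (-1) ^ r * q ^ (5 * T r + 4 * r)) * c⁻¹ := by
  obtain ⟨C, hC0, hC⟩ := rf_bdd hc h
  have s1 : Summable (fun L : ℤ => ‖q ^ (L ^ 2 + L) * rf q L‖) := by
    refine Summable.of_nonneg_of_le (fun _ => norm_nonneg _) (fun r => ?_)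
      ((summ hq h0 _ exp1).mul_right C)
    rw [norm_mul]
    gcongr
    exact hC _
  have s2 : Summable (fun r : ℤ => ‖(-1) ^ r * q ^ (5 * T r + 4 * r)‖) := by
    simpa [norm_mul, norm_zpow] using summ hq h0 _ exp2
  have l1 := lim1 hc h s1
  have l2 := lim2 hc h s2 1
  have : ∀ n : ℕ, ∑' r : ℤ, q ^ (r ^ 2 + r) * rf q r * rf q (n - r) =
      ∑' r : ℤ, ((-1) ^ r * q ^ (5 * T r + 4 * r)) * rf q (n - r) * rf q (n + r + 1) := by
    intro n
    rw [← step2 hq h0]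
    apply tsum_congr; intro r; ring
  simp_rw [this] at l1
  have := tendsto_nhds_unique l1 l2
  rw [tsum_mul_right, tsum_mul_right, tsum_mul_right] at this
  exact mul_right_cancel₀ (inv_ne_zero hc) this

lemma jtp {q : ℂ} (hq : ‖q‖ < 1) (h0 : q ≠ 0) :
    Tendsto (fun n : ℕ => ∏ i ∈ Finset.range n, ((1 - q ^ (5 * i + 5)) * (1 - q ^ (5 * i + 4)) *
      (1 - q ^ (5 * i + 1)))) atTop (𝓝 (∑' r : ℤ, (-1) ^ r * q ^ (5 * T r + 4 * r))) := by
  have hq5 : ‖q ^ 5‖ < 1 := by rw [norm_pow]; exact pow_lt_one₀ (norm_nonneg q) hq (by norm_num)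
  obtain ⟨c, hc, h⟩ := poch_lim hq5
  have s2 : Summable (fun r : ℤ => ‖(-1) ^ r * q ^ (5 * T r + 4 * r)‖) := by
    simpa [norm_mul, norm_zpow] using summ hq h0 _ exp2
  have l2 := lim2 hc h s2 0
  have e1 : ∀ n : ℕ, ∑' r : ℤ, ((-1) ^ r * q ^ (5 * T r + 4 * r)) * rf (q ^ 5) (n - r) *
      rf (q ^ 5) (n + r + 0) = rf (q ^ 5) ((2 * n : ℕ) : ℤ) *
      ∏ i ∈ Finset.range n, ((1 - q ^ 4 * (q ^ 5) ^ i) * (1 - (q ^ 5) ^ (i + 1) / q ^ 4)) := by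
    intro n
    rw [← P_closed hq5 (pow_ne_zero _ h0) (pow_ne_zero _ h0), P]
    apply tsum_congr; intro r
    rw [add_zero, zpow_add₀ h0, zpow_mul, zpow_mul, neg_eq_neg_one_mul (q ^ 4), mul_zpow]
    norm_cast
    ring
  simp_rw [e1] at l2
  have t2 : Tendsto (fun n : ℕ => 2 * n) atTop atTop := tendsto_id.const_mul_atTop' (by norm_num)
  have l3 := (l2.mul (h.comp t2)).mul h
  rw [tsum_mul_right, tsum_mul_right] at l3
  rw [show (∑' r : ℤ, (-1) ^ r * q ^ (5 * T r + 4 * r)) * c⁻¹ * c⁻¹ * c * c =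
    ∑' r : ℤ, (-1) ^ r * q ^ (5 * T r + 4 * r) by field_simp] at l3
  apply l3.congr
  intro n
  simp only [Function.comp]
  rw [rf_nat]
  have := qPoch_ne hq5 (2 * n)
  rw [mul_right_comm _ _ (qPoch (q ^ 5) (q ^ 5) (2 * n)), inv_mul_cancel₀ this, one_mul, qPoch,
    ← Finset.prod_mul_distrib]
  apply Finset.prod_congr rfl
  intro i _
  have : (q ^ 5) ^ (i + 1) / q ^ 4 = q ^ (5 * i + 1) := by
    field_simp; ring
  rw [this]
  ring

lemma rhs_lim {q : ℂ} (hq : ‖q‖ < 1) :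
    Tendsto (fun n : ℕ => ∏ i ∈ Finset.range n, ((1 - q ^ (5 * i + 2))⁻¹ * (1 - q ^ (5 * i + 3))⁻¹))
      atTop (𝓝 (∏' j : {j : ℕ // 0 < j ∧ j % 5 ≠ 0 ∧ j % 5 ≠ 1 ∧ j % 5 ≠ 4},
        (1 - q ^ (j : ℕ))⁻¹)) := by
  let s : Set ℕ := {j : ℕ | 0 < j ∧ j % 5 ≠ 0 ∧ j % 5 ≠ 1 ∧ j % 5 ≠ 4}
  have e0 : ∏' j : {j : ℕ // 0 < j ∧ j % 5 ≠ 0 ∧ j % 5 ≠ 1 ∧ j % 5 ≠ 4}, (1 - q ^ (j : ℕ))⁻¹ =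
      ∏' j : ℕ, s.mulIndicator (fun j => (1 - q ^ j)⁻¹) j :=
    tprod_subtype s (fun j => (1 - q ^ j)⁻¹)
  rw [e0]
  have hm : Multipliable (s.mulIndicator (fun j : ℕ => (1 - q ^ j)⁻¹)) := by
    have e1 : s.mulIndicator (fun j : ℕ => (1 - q ^ j)⁻¹) =
        fun j => 1 + s.indicator (fun j : ℕ => q ^ j * (1 - q ^ j)⁻¹) j := by
      funext j
      by_cases hj : j ∈ s
      · rw [Set.mulIndicator_of_mem hj, Set.indicator_of_mem hj]
        have := one_sub_ne hq (n := j) hj.1.ne'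
        field_simp
        ring
      · rw [Set.mulIndicator_of_notMem hj, Set.indicator_of_notMem hj, add_zero]
    rw [e1]
    apply multipliable_one_add_of_summable
    refine Summable.of_nonneg_of_le (fun _ => norm_nonneg _) (fun j => ?_)
      ((summable_geometric_of_lt_one (norm_nonneg q) hq).mul_right (1 - ‖q‖)⁻¹)
    by_cases hj : j ∈ s
    · rw [Set.indicator_of_mem hj, norm_mul, norm_pow, norm_inv]
      gcongr
      · have h1 : ‖q‖ ^ j ≤ ‖q‖ := pow_le_of_le_one (norm_nonneg q) hq.le hj.1.ne'
        have h2 := norm_sub_norm_le (1 : ℂ) (q ^ j)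
        rw [norm_one, norm_pow] at h2
        linarith
    · rw [Set.indicator_of_notMem hj, norm_zero]
      have : 0 < 1 - ‖q‖ := by linarith
      positivity
  have t5 : Tendsto (fun n : ℕ => 5 * n) atTop atTop := tendsto_id.const_mul_atTop' (by norm_num)
  apply (hm.hasProd.tendsto_prod_nat.comp t5).congr
  intro n
  simp only [Function.comp]
  induction n with
  | zero => simp
  | succ n ih =>
    rw [Finset.prod_range_succ, ← ih, show 5 * (n + 1) = 5 * n + 1 + 1 + 1 + 1 + 1 by ring]
    simp only [Finset.prod_range_succ]
    rw [Set.mulIndicator_of_notMem (a := 5 * n) (by simp [s]),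
      Set.mulIndicator_of_notMem (a := 5 * n + 1) (by simp [s] <;> omega),
      Set.mulIndicator_of_mem (a := 5 * n + 1 + 1) (by simp [s] <;> omega),
      Set.mulIndicator_of_mem (a := 5 * n + 1 + 1 + 1) (by simp [s] <;> omega),
      Set.mulIndicator_of_notMem (a := 5 * n + 1 + 1 + 1 + 1) (by simp [s] <;> omega)]
    ring

lemma qPoch_five (q : ℂ) (n : ℕ) : qPoch q q (5 * n) =
    (∏ i ∈ Finset.range n, ((1 - q ^ (5 * i + 5)) * (1 - q ^ (5 * i + 4)) *
      (1 - q ^ (5 * i + 1)))) * ∏ i ∈ Finset.range n, ((1 - q ^ (5 * i + 2)) * (1 - q ^ (5 * i + 3))) := by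
  induction n with
  | zero => simp [qPoch]
  | succ n ih =>
    rw [show 5 * (n + 1) = 5 * n + 1 + 1 + 1 + 1 + 1 by ring]
    simp only [Finset.prod_range_succ, qPoch_succ, ih]
    ring

end RR

/-- The first Rogers–Ramanujan identity. -/
theorem rogers_ramanujan_first (q : ℂ) (hq : ‖q‖ < 1) :
    ∑' j : ℕ, q ^ (j ^ 2 + j) / qPoch q q j =
      ∏' j : {j : ℕ // 0 < j ∧ j % 5 ≠ 0 ∧ j % 5 ≠ 1 ∧ j % 5 ≠ 4},
        (1 - q ^ (j : ℕ))⁻¹ := by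
  by_cases h0 : q = 0
  · subst h0
    rw [tsum_eq_single 0]
    · have : ∀ j : {j : ℕ // 0 < j ∧ j % 5 ≠ 0 ∧ j % 5 ≠ 1 ∧ j % 5 ≠ 4},
          (1 - (0 : ℂ) ^ (j : ℕ))⁻¹ = 1 := by
        intro j
        rw [zero_pow j.2.1.ne']; simp
      rw [tprod_congr this, tprod_one]
      simp [qPoch]
    · intro j hj
      rw [zero_pow (by positivity), zero_div]
  obtain ⟨c, hc, h⟩ := RR.poch_lim hq
  have e1 : ∑' j : ℕ, q ^ (j ^ 2 + j) / qPoch q q j = ∑' L : ℤ, q ^ (L ^ 2 + L) * RR.rf q L := by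
    rw [← Function.Injective.tsum_eq (g := ((↑) : ℕ → ℤ)) Nat.cast_injective]
    · apply tsum_congr
      intro j
      rw [RR.rf_nat, div_eq_mul_inv]
      norm_cast
    · intro L hL
      by_contra hn
      apply hL
      have : L < 0 := by
        by_contra h'
        exact hn ⟨L.toNat, by simp; omega⟩
      simp [RR.rf_neg q this]
  rw [e1, RR.main_sum hq h0 hc h]
  have t5 : Filter.Tendsto (fun n : ℕ => 5 * n) Filter.atTop Filter.atTop :=
    Filter.tendsto_id.const_mul_atTop' (by norm_num)
  have l1 := (RR.jtp hq h0).mul ((h.comp t5).inv₀ hc)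
  refine tendsto_nhds_unique l1 ((RR.rhs_lim hq).congr ?_)
  intro n
  simp only [Function.comp]
  have hn := RR.qPoch_ne hq (5 * n)
  rw [RR.qPoch_five] at hn ⊢
  have h1 := left_ne_zero_of_mul hn
  rw [mul_inv, mul_inv_cancel_left₀ h1, ← Finset.prod_inv_distrib]
  apply Finset.prod_congr rfl
  intro i _
  rw [mul_inv]
end

section
/- For every complex number q with |q| < 1, the sum over all nonnegative integers j of q^(2j^2+2j) · (-q^(2j+2); q)_∞ / ((q^2; q^2)_j) equals the product over all positive integers j with j not congruent to 0, 1, or -1 modulo 7 of 1/(1 - q^j). -/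
/-- The infinite q-Pochhammer symbol `(a; q)_∞ = ∏_{h=0}^{∞} (1 - a q^h)`. -/
noncomputable def qPochInf (a q : ℂ) : ℂ := ∏' h : ℕ, (1 - a * q ^ h)

open Filter Topology

namespace RS

/-- Triangular numbers. -/
def tr : ℕ → ℕ
  | 0 => 0
  | n + 1 => tr n + (n + 1)

lemma two_tr (n : ℕ) : 2 * tr n = n * (n + 1) := by
  induction n with
  | zero => rfl
  | succ n ih => simp only [tr]; nlinarith

/-- `u q n = 1 / (q; q)_n`. -/
noncomputable def u (q : ℂ) (n : ℕ) : ℂ := (∏ i ∈ Finset.range n, (1 - q ^ (i + 1)))⁻¹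

/-- `(q; q)_∞`. -/
noncomputable def phi (q : ℂ) : ℂ := ∏' i : ℕ, (1 - q ^ (i + 1))

lemma one_sub_ne {q : ℂ} (hq : ‖q‖ < 1) (n : ℕ) : 1 - q ^ (n + 1) ≠ 0 := by
  intro h
  have h1 : q ^ (n + 1) = 1 := (sub_eq_zero.mp h).symm
  have h2 : ‖q‖ ^ (n + 1) = 1 := by rw [← norm_pow, h1, norm_one]
  have h3 : ‖q‖ ^ (n + 1) < 1 := pow_lt_one₀ (norm_nonneg _) hq (by simp)
  linarith

lemma u_zero (q : ℂ) : u q 0 = 1 := by simp [u]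

lemma u_succ {q : ℂ} (hq : ‖q‖ < 1) (n : ℕ) : (1 - q ^ (n + 1)) * u q (n + 1) = u q n := by
  have := one_sub_ne hq n
  unfold u
  rw [Finset.prod_range_succ, mul_inv]
  field_simp

lemma u_ne {q : ℂ} (hq : ‖q‖ < 1) (n : ℕ) : u q n ≠ 0 := by
  unfold u
  exact inv_ne_zero (Finset.prod_ne_zero_iff.mpr fun i _ => one_sub_ne hq i)

lemma summable_geo {q : ℂ} (hq : ‖q‖ < 1) : Summable fun n : ℕ => ‖q‖ ^ n :=
  summable_geometric_of_lt_one (norm_nonneg _) hq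

lemma summable_pow_norm {q : ℂ} (hq : ‖q‖ < 1) (w : ℂ) :
    Summable fun n : ℕ => ‖w * q ^ n‖ := by
  simp only [norm_mul, norm_pow]
  exact (summable_geo hq).mul_left _

lemma mult_aux {q : ℂ} (hq : ‖q‖ < 1) (w : ℂ) : Multipliable fun i : ℕ => (1 - w * q ^ i) := by
  simp only [sub_eq_add_neg]
  exact multipliable_one_add_of_summable (f := fun i : ℕ => -(w * q ^ i))
    (by simpa only [norm_neg] using summable_pow_norm hq w)

lemma tendsto_aux {q : ℂ} (hq : ‖q‖ < 1) (w : ℂ) :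
    Tendsto (fun n => ∏ i ∈ Finset.range n, (1 - w * q ^ i)) atTop
      (𝓝 (∏' i : ℕ, (1 - w * q ^ i))) :=
  (mult_aux hq w).hasProd.tendsto_prod_nat

lemma phi_eq (q : ℂ) : phi q = ∏' i : ℕ, (1 - q * q ^ i) := by
  unfold phi
  congr 1; ext i; ring

lemma phi_ne {q : ℂ} (hq : ‖q‖ < 1) : phi q ≠ 0 := by
  unfold phi
  simp only [sub_eq_add_neg]
  refine tprod_one_add_ne_zero_of_summable (f := fun n : ℕ => -q ^ (n + 1)) ?_ ?_
  · intro i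
    simpa [sub_eq_add_neg] using one_sub_ne hq i
  · have := summable_pow_norm hq q
    refine this.congr ?_
    intro n
    rw [norm_neg, pow_succ, mul_comm]

lemma tendsto_u {q : ℂ} (hq : ‖q‖ < 1) : Tendsto (u q) atTop (𝓝 (phi q)⁻¹) := by
  have h := tendsto_aux hq q
  rw [← phi_eq] at h
  refine (h.inv₀ (phi_ne hq)).congr ?_
  intro n
  unfold u
  congr 1
  refine Finset.prod_congr rfl fun i _ => ?_
  ring

lemma u_bdd {q : ℂ} (hq : ‖q‖ < 1) : ∃ C : ℝ, 0 < C ∧ ∀ n, ‖u q n‖ ≤ C := by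
  obtain ⟨C, hC⟩ := (Metric.isBounded_range_of_tendsto _ (tendsto_u hq)).exists_norm_le
  refine ⟨max C 1, by positivity, fun n => (hC _ ⟨n, rfl⟩).trans (le_max_left _ _)⟩

lemma le_tr (n : ℕ) : n ≤ tr n := by
  cases n with
  | zero => simp
  | succ n => simp [tr]

lemma norm_pow_le {q : ℂ} (hq : ‖q‖ < 1) {a b : ℕ} (h : a ≤ b) : ‖q ^ b‖ ≤ ‖q‖ ^ a := by
  rw [norm_pow]
  exact pow_le_pow_of_le_one (norm_nonneg _) hq.le h

/-- Euler's identity. -/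
lemma euler_summable {q : ℂ} (hq : ‖q‖ < 1) {w : ℂ} (hw : ‖w‖ ≤ 1) :
    Summable fun k : ℕ => q ^ tr k * w ^ k * u q k := by
  obtain ⟨C, hC, hu⟩ := u_bdd hq
  refine Summable.of_norm_bounded ((summable_geo hq).mul_right C) fun k => ?_
  rw [norm_mul, norm_mul, norm_pow w]
  have h1 := norm_pow_le hq (le_tr k)
  have h2 : ‖w‖ ^ k ≤ 1 := pow_le_one₀ (norm_nonneg _) hw
  calc ‖q ^ tr k‖ * ‖w‖ ^ k * ‖u q k‖ ≤ ‖q‖ ^ k * 1 * C := by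
        gcongr; exact hu k
    _ = _ := by ring

lemma euler_step {q : ℂ} (hq : ‖q‖ < 1) {w : ℂ} (hw : ‖w‖ ≤ 1) :
    ∑' k : ℕ, q ^ tr k * w ^ k * u q k =
      (1 + w * q) * ∑' k : ℕ, q ^ tr k * (w * q) ^ k * u q k := by
  have hwq : ‖w * q‖ ≤ 1 := by
    rw [norm_mul]; exact mul_le_one₀ hw (norm_nonneg _) hq.le
  have s1 := euler_summable hq hw
  have s2 := euler_summable hq hwq
  have key : ∑' k : ℕ, (q ^ tr k * w ^ k * u q k - q ^ tr k * (w * q) ^ k * u q k) =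
      w * q * ∑' k : ℕ, q ^ tr k * (w * q) ^ k * u q k := by
    rw [(s1.sub s2).tsum_eq_zero_add, ← tsum_mul_left]
    simp only [pow_zero, sub_self, zero_add]
    refine tsum_congr fun k => ?_
    rw [← u_succ hq k, tr]
    ring
  rw [s1.tsum_sub s2] at key
  linear_combination key

lemma euler_iter {q : ℂ} (hq : ‖q‖ < 1) {w : ℂ} (hw : ‖w‖ ≤ 1) (n : ℕ) :
    ∑' k : ℕ, q ^ tr k * w ^ k * u q k =
      (∏ i ∈ Finset.range n, (1 - (-(w * q)) * q ^ i)) *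
        ∑' k : ℕ, q ^ tr k * (w * q ^ n) ^ k * u q k := by
  induction n with
  | zero => simp
  | succ n ih =>
    have hwn : ‖w * q ^ n‖ ≤ 1 := by
      rw [norm_mul, norm_pow]
      exact mul_le_one₀ hw (by positivity) (pow_le_one₀ (norm_nonneg _) hq.le)
    rw [ih, euler_step hq hwn, Finset.prod_range_succ]
    ring_nf

lemma euler {q : ℂ} (hq : ‖q‖ < 1) {w : ℂ} (hw : ‖w‖ ≤ 1) :
    ∑' k : ℕ, q ^ tr k * w ^ k * u q k = qPochInf (-(w * q)) q := by
  obtain ⟨C, hC, hu⟩ := u_bdd hq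
  have h1 := tendsto_aux hq (-(w * q))
  have h2 : Tendsto (fun n : ℕ => ∑' k : ℕ, q ^ tr k * (w * q ^ n) ^ k * u q k) atTop
      (𝓝 (∑' k : ℕ, q ^ tr k * (0 : ℂ) ^ k * u q k)) := by
    refine tendsto_tsum_of_dominated_convergence (bound := fun k => ‖q‖ ^ k * C)
      ((summable_geo hq).mul_right C) ?_ ?_
    · intro k
      have h0 : Tendsto (fun n : ℕ => w * q ^ n) atTop (𝓝 0) := by
        simpa using (tendsto_pow_atTop_nhds_zero_of_norm_lt_one hq).const_mul w
      exact ((h0.pow k).const_mul _).mul_const _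
    · refine Eventually.of_forall fun n k => ?_
      have hwn : ‖w * q ^ n‖ ≤ 1 := by
        rw [norm_mul, norm_pow]
        exact mul_le_one₀ hw (by positivity) (pow_le_one₀ (norm_nonneg _) hq.le)
      rw [norm_mul, norm_mul, norm_pow (w * q ^ n)]
      have h1 := norm_pow_le hq (le_tr k)
      have h2 : ‖w * q ^ n‖ ^ k ≤ 1 := pow_le_one₀ (norm_nonneg _) hwn
      calc ‖q ^ tr k‖ * ‖w * q ^ n‖ ^ k * ‖u q k‖ ≤ ‖q‖ ^ k * 1 * C := by
            gcongr; exact hu k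
        _ = _ := by ring
  have h3 : ∑' k : ℕ, q ^ tr k * (0 : ℂ) ^ k * u q k = 1 := by
    rw [tsum_eq_single 0]
    · simp [tr, u_zero]
    · intro k hk; simp [hk]
  rw [h3] at h2
  have h4 := h1.mul h2
  rw [mul_one] at h4
  have h5 := h4.congr (fun n => (euler_iter hq hw n).symm)
  exact tendsto_nhds_unique tendsto_const_nhds h5

open Finset in
lemma vander {q : ℂ} (hq : ‖q‖ < 1) (N : ℕ) : ∀ L : ℕ,
    ∑ p ∈ antidiagonal N, q ^ (p.2 ^ 2 + L * p.2) * u q p.1 * u q p.2 * u q (p.2 + L) =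
      u q N * u q (N + L) := by
  induction N with
  | zero => intro L; simp [u_zero]
  | succ N ih =>
    intro L
    have key : (1 - q ^ (N + 1)) * ∑ p ∈ antidiagonal (N + 1),
        q ^ (p.2 ^ 2 + L * p.2) * u q p.1 * u q p.2 * u q (p.2 + L) =
        (∑ p ∈ antidiagonal (N + 1),
          q ^ (p.2 ^ 2 + L * p.2) * ((1 - q ^ p.1) * u q p.1) * u q p.2 * u q (p.2 + L)) +
        ∑ p ∈ antidiagonal (N + 1),
          q ^ (p.2 ^ 2 + L * p.2) * q ^ p.1 * u q p.1 * ((1 - q ^ p.2) * u q p.2) *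
            u q (p.2 + L) := by
      rw [mul_sum, ← sum_add_distrib]
      refine sum_congr rfl fun p hp => ?_
      rw [← Finset.HasAntidiagonal.mem_antidiagonal.mp hp]
      ring
    have h1 : (∑ p ∈ antidiagonal (N + 1),
          q ^ (p.2 ^ 2 + L * p.2) * ((1 - q ^ p.1) * u q p.1) * u q p.2 * u q (p.2 + L)) =
        u q N * u q (N + L) := by
      rw [Finset.Nat.sum_antidiagonal_succ, ← ih L]
      simp only [pow_zero, sub_self, zero_mul, mul_zero, zero_add]
      refine sum_congr rfl fun p _ => ?_
      rw [u_succ hq]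
    have h2 : (∑ p ∈ antidiagonal (N + 1),
          q ^ (p.2 ^ 2 + L * p.2) * q ^ p.1 * u q p.1 * ((1 - q ^ p.2) * u q p.2) *
            u q (p.2 + L)) = q ^ (N + 1 + L) * (u q N * u q (N + (L + 1))) := by
      rw [Finset.Nat.sum_antidiagonal_succ', ← ih (L + 1), mul_sum]
      simp only [pow_zero, sub_self, zero_mul, mul_zero, zero_add]
      refine sum_congr rfl fun p hp => ?_
      rw [u_succ hq, ← Finset.HasAntidiagonal.mem_antidiagonal.mp hp, show p.2 + 1 + L = p.2 + (L + 1) by ring]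
      ring
    rw [h1, h2, ← u_succ hq (N + L)] at key
    have h3 : (1 - q ^ (N + 1)) * (∑ p ∈ antidiagonal (N + 1),
        q ^ (p.2 ^ 2 + L * p.2) * u q p.1 * u q p.2 * u q (p.2 + L)) =
        (1 - q ^ (N + 1)) * (u q (N + 1) * u q (N + 1 + L)) := by
      rw [key, ← mul_assoc (1 - q ^ (N + 1)), u_succ hq N, show N + (L + 1) = N + L + 1 by ring,
        show N + 1 + L = N + L + 1 by ring]
      ring
    exact mul_left_cancel₀ (one_sub_ne hq N) h3

/-- Bailey pairs relative to `a = q` (up to normalisation). -/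
def Bailey (q : ℂ) (α β : ℕ → ℂ) : Prop :=
  ∀ n, β n = ∑ p ∈ Finset.HasAntidiagonal.antidiagonal n, α p.2 * u q p.1 * u q (p.1 + 2 * p.2 + 1)

open Finset in
lemma bailey_step {q : ℂ} (hq : ‖q‖ < 1) {α β : ℕ → ℂ} (h : Bailey q α β) :
    Bailey q (fun j => q ^ (j ^ 2 + j) * α j)
      (fun n => ∑ p ∈ antidiagonal n, q ^ (p.2 ^ 2 + p.2) * u q p.1 * β p.2) := by
  intro n
  have e1 : ∑ p ∈ antidiagonal n, q ^ (p.2 ^ 2 + p.2) * u q p.1 * β p.2 =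
      ∑ p ∈ antidiagonal n, ∑ r ∈ antidiagonal p.2,
        q ^ ((r.1 + r.2) ^ 2 + (r.1 + r.2)) * u q p.1 *
          (α r.2 * u q r.1 * u q (r.1 + 2 * r.2 + 1)) := by
    refine sum_congr rfl fun p _ => ?_
    rw [h p.2, mul_sum]
    refine sum_congr rfl fun r hr => ?_
    rw [Finset.HasAntidiagonal.mem_antidiagonal.mp hr]
  have e2 : ∑ p ∈ antidiagonal n, q ^ (p.2 ^ 2 + p.2) * α p.2 * u q p.1 * u q (p.1 + 2 * p.2 + 1) =
      ∑ p ∈ antidiagonal n, ∑ r ∈ antidiagonal p.1,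
        q ^ ((r.2 + p.2) ^ 2 + (r.2 + p.2)) * u q r.1 *
          (α p.2 * u q r.2 * u q (r.2 + 2 * p.2 + 1)) := by
    refine sum_congr rfl fun p _ => ?_
    have := vander hq p.1 (2 * p.2 + 1)
    rw [mul_assoc, show p.1 + 2 * p.2 + 1 = p.1 + (2 * p.2 + 1) by ring, ← this, mul_sum]
    refine sum_congr rfl fun r _ => ?_
    rw [show r.2 + 2 * p.2 + 1 = r.2 + (2 * p.2 + 1) by ring]
    ring
  simp only
  rw [e1, e2, sum_sigma', sum_sigma']
  refine sum_nbij' (fun x => ⟨(x.1.1 + x.2.1, x.2.2), (x.1.1, x.2.1)⟩)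
    (fun x => ⟨(x.2.1, x.2.2 + x.1.2), (x.2.2, x.1.2)⟩) ?_ ?_ ?_ ?_ ?_
  · rintro ⟨⟨a, b⟩, ⟨c, d⟩⟩ hx
    simp only [mem_sigma, Finset.HasAntidiagonal.mem_antidiagonal] at hx ⊢
    exact ⟨by omega, trivial⟩
  · rintro ⟨⟨a, b⟩, ⟨c, d⟩⟩ hx
    simp only [mem_sigma, Finset.HasAntidiagonal.mem_antidiagonal] at hx ⊢
    exact ⟨by omega, trivial⟩
  · rintro ⟨⟨a, b⟩, ⟨c, d⟩⟩ hx
    simp only [mem_sigma, Finset.HasAntidiagonal.mem_antidiagonal] at hx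
    obtain ⟨h1, h2⟩ := hx
    subst h2
    rfl
  · rintro ⟨⟨a, b⟩, ⟨c, d⟩⟩ hx
    simp only [mem_sigma, Finset.HasAntidiagonal.mem_antidiagonal] at hx
    obtain ⟨h1, h2⟩ := hx
    subst h2
    rfl
  · rintro ⟨⟨a, b⟩, ⟨c, d⟩⟩ hx
    rfl

/-- `ch n = n (n - 1) / 2`. -/
def ch : ℕ → ℕ
  | 0 => 0
  | n + 1 => tr n

lemma two_ch (n : ℕ) : 2 * ch n + 2 * n = n * (n + 1) := by
  cases n with
  | zero => rfl
  | succ n => simp only [ch, two_tr]; ring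

noncomputable def al (q : ℂ) (j : ℕ) : ℂ := (-1) ^ j * q ^ ch j * (1 - q ^ (2 * j + 1))

lemma delta_partial {q : ℂ} (hq : ‖q‖ < 1) (J : ℕ) : ∀ r : ℕ,
    (1 - q ^ (J + 1 + r)) * ∑ j ∈ Finset.range (J + 1),
      al q j * u q (J + 1 + r - j) * u q (J + 1 + r + j + 1) =
    (-1) ^ J * q ^ tr J * (1 - q ^ (J + 1)) * u q r * u q (J + 1 + r + J + 1) := by
  induction J with
  | zero =>
    intro r
    have := u_succ hq r
    simp [al, ch, tr, ← this, add_comm 1 r]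
    ring
  | succ J ih =>
    intro r
    rw [Finset.sum_range_succ, mul_add]
    have h1 := ih (r + 1)
    rw [show J + 1 + (r + 1) = J + 1 + 1 + r by ring] at h1
    rw [h1, show J + 1 + 1 + r - (J + 1) = r + 1 by omega, ← u_succ hq r,
      show J + 1 + 1 + r + (J + 1) + 1 = J + 1 + 1 + r + J + 1 + 1 by ring,
      ← u_succ hq (J + 1 + 1 + r + J + 1)]
    simp only [al, ch, tr]
    ring

lemma delta {q : ℂ} (hq : ‖q‖ < 1) : Bailey q (al q) (fun n => if n = 0 then 1 else 0) := by
  intro n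
  have e : ∑ p ∈ Finset.HasAntidiagonal.antidiagonal n, al q p.2 * u q p.1 * u q (p.1 + 2 * p.2 + 1) =
      ∑ j ∈ Finset.range (n + 1), al q j * u q (n - j) * u q (n + j + 1) := by
    rw [← Finset.Nat.sum_antidiagonal_swap,
      Finset.Nat.sum_antidiagonal_eq_sum_range_succ_mk]
    refine Finset.sum_congr rfl fun j hj => ?_
    have : j ≤ n := by simpa [Nat.lt_succ_iff] using hj
    simp only [Prod.swap]
    rw [show n - j + 2 * j + 1 = n + j + 1 by omega]
  rw [e]
  cases n with
  | zero =>
    have := u_succ hq 0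
    simp [u_zero] at this
    simp [al, ch, u_zero, this]
  | succ m =>
    have h1 := delta_partial hq m 0
    have hne := one_sub_ne hq m
    rw [add_zero, u_zero] at h1
    have h2 : ∑ j ∈ Finset.range (m + 1), al q j * u q (m + 1 - j) * u q (m + 1 + j + 1) =
        (-1) ^ m * q ^ tr m * u q (m + 1 + m + 1) := by
      apply mul_left_cancel₀ hne
      rw [h1]; ring
    rw [Finset.sum_range_succ, h2, ← u_succ hq (m + 1 + m + 1)]
    simp only [al, ch, Nat.sub_self, u_zero]
    simp only [Nat.add_eq_zero_iff, one_ne_zero, and_false, if_false]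
    rw [show m + 1 + (m + 1) + 1 = m + 1 + m + 1 + 1 by ring]
    ring

/-- second iterate -/
noncomputable def be (q : ℂ) (n : ℕ) : ℂ :=
  ∑ p ∈ Finset.HasAntidiagonal.antidiagonal n, q ^ (p.2 ^ 2 + p.2) * u q p.1 * u q p.2

lemma bailey3 {q : ℂ} (hq : ‖q‖ < 1) (n : ℕ) :
    ∑ p ∈ Finset.HasAntidiagonal.antidiagonal n, q ^ (p.2 ^ 2 + p.2) * u q p.1 * be q p.2 =
    ∑ p ∈ Finset.HasAntidiagonal.antidiagonal n, q ^ (3 * (p.2 ^ 2 + p.2)) * al q p.2 * u q p.1 *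
      u q (p.1 + 2 * p.2 + 1) := by
  have h1 := bailey_step hq (delta hq)
  have h2 : (fun n => ∑ p ∈ Finset.HasAntidiagonal.antidiagonal n, q ^ (p.2 ^ 2 + p.2) * u q p.1 *
      (if p.2 = 0 then (1 : ℂ) else 0)) = u q := by
    funext n
    rw [Finset.sum_eq_single (n, 0)]
    · simp
    · rintro ⟨a, b⟩ hb hne
      rw [Finset.HasAntidiagonal.mem_antidiagonal] at hb
      by_cases h : b = 0
      · subst h; exact absurd (by simpa using hb) (by simpa using hne)
      · simp [h]
    · simp
  rw [h2] at h1
  have h3 := bailey_step hq (bailey_step hq h1) n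
  simp only at h3
  unfold be
  rw [h3]
  refine Finset.sum_congr rfl fun p _ => ?_
  ring

lemma tannery {f : ℕ → ℂ} (hf : Summable fun m => ‖f m‖) {g : ℕ → ℕ → ℂ} {K : ℝ} {l : ℂ}
    (hK : ∀ n m, ‖g n m‖ ≤ K) (hg : ∀ m, Tendsto (fun n => g n m) atTop (𝓝 l)) :
    Tendsto (fun n => ∑ m ∈ Finset.range (n + 1), f m * g (n - m) m) atTop
      (𝓝 (l * ∑' m, f m)) := by
  have h := tendsto_tsum_of_dominated_convergence (𝓕 := atTop) (bound := fun m => ‖f m‖ * K)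
    (f := fun n m => if m ∈ Finset.range (n + 1) then f m * g (n - m) m else 0)
    (g := fun m => f m * l) (hf.mul_right K) ?_ ?_
  · rw [tsum_mul_right, mul_comm] at h
    refine h.congr fun n => ?_
    rw [tsum_eq_sum (s := Finset.range (n + 1))]
    · exact Finset.sum_congr rfl fun m hm => if_pos hm
    · intro m hm; exact if_neg hm
  · intro m
    have h1 : Tendsto (fun n => f m * g (n - m) m) atTop (𝓝 (f m * l)) :=
      ((hg m).comp (tendsto_sub_atTop_nat m)).const_mul _
    refine h1.congr' ?_
    filter_upwards [eventually_ge_atTop m] with n hn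
    rw [if_pos (by simpa [Nat.lt_succ_iff] using hn)]
  · refine Eventually.of_forall fun n m => ?_
    have hK0 : 0 ≤ K := (norm_nonneg _).trans (hK 0 0)
    split_ifs
    · rw [norm_mul]; gcongr; exact hK _ _
    · rw [norm_zero]; positivity

lemma be_bdd {q : ℂ} (hq : ‖q‖ < 1) : ∃ C : ℝ, 0 < C ∧ ∀ n, ‖be q n‖ ≤ C := by
  obtain ⟨C, hC, hu⟩ := u_bdd hq
  refine ⟨(∑' m : ℕ, ‖q‖ ^ m) * C * C + 1, ?_, fun n => ?_⟩
  · have : 0 ≤ ∑' m : ℕ, ‖q‖ ^ m := tsum_nonneg fun m => by positivity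
    positivity
  · unfold be
    rw [← Finset.Nat.sum_antidiagonal_swap,
      Finset.Nat.sum_antidiagonal_eq_sum_range_succ_mk]
    simp only [Prod.swap]
    have h1 : ∑ m ∈ Finset.range (n + 1), ‖q‖ ^ m * C * C ≤ (∑' m : ℕ, ‖q‖ ^ m) * C * C := by
      rw [← Finset.sum_mul, ← Finset.sum_mul]
      gcongr
      exact (summable_geo hq).sum_le_tsum _ fun m _ => by positivity
    refine (norm_sum_le_of_le _ (fun m _ => ?_)).trans (h1.trans (by linarith))
    rw [norm_mul, norm_mul]
    gcongr
    · exact norm_pow_le hq (by nlinarith)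
    · exact hu _
    · exact hu _

lemma ag_summable {q : ℂ} (hq : ‖q‖ < 1) : Summable fun m : ℕ => ‖q ^ (m ^ 2 + m) * be q m‖ := by
  obtain ⟨C, hC, hb⟩ := be_bdd hq
  refine Summable.of_nonneg_of_le (fun _ => norm_nonneg _) (fun m => ?_)
    ((summable_geo hq).mul_right C)
  rw [norm_mul]
  gcongr
  · exact norm_pow_le hq (by nlinarith)
  · exact hb _

lemma al_summable {q : ℂ} (hq : ‖q‖ < 1) :
    Summable fun m : ℕ => ‖q ^ (3 * (m ^ 2 + m)) * al q m‖ := by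
  refine Summable.of_nonneg_of_le (fun _ => norm_nonneg _) (fun m => ?_)
    ((summable_geo hq).mul_right 2)
  rw [norm_mul]
  gcongr
  · exact norm_pow_le hq (by nlinarith)
  · unfold al
    rw [norm_mul, norm_mul, norm_pow, norm_neg, norm_one, one_pow, one_mul]
    have h1 : ‖q ^ ch m‖ ≤ 1 := by simpa using norm_pow_le hq (Nat.zero_le (ch m))
    have h2 : ‖1 - q ^ (2 * m + 1)‖ ≤ 2 := by
      have h3 := norm_pow_le hq (Nat.zero_le (2 * m + 1))
      have h4 := norm_sub_le (1 : ℂ) (q ^ (2 * m + 1))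
      simp only [norm_one, pow_zero] at h3 h4
      linarith
    nlinarith [norm_nonneg (q ^ ch m), norm_nonneg (1 - q ^ (2 * m + 1))]

lemma bailey_limit {q : ℂ} (hq : ‖q‖ < 1) :
    phi q * ∑' m : ℕ, q ^ (m ^ 2 + m) * be q m = ∑' m : ℕ, q ^ (3 * (m ^ 2 + m)) * al q m := by
  obtain ⟨C, hC, hu⟩ := u_bdd hq
  have hp := phi_ne hq
  have t1 := tannery (ag_summable hq) (g := fun n _ => u q n) (K := C) (fun n _ => hu n)
    (fun _ => tendsto_u hq)
  have t2 := tannery (al_summable hq) (g := fun n m => u q n * u q (n + 2 * m + 1))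
    (K := C * C) (l := (phi q)⁻¹ * (phi q)⁻¹)
    (fun n m => by
      rw [norm_mul]
      exact mul_le_mul (hu _) (hu _) (norm_nonneg _) hC.le)
    (fun m => (tendsto_u hq).mul ((tendsto_u hq).comp
      (tendsto_atTop_mono (fun n => by simp only [id]; omega) tendsto_id)))
  have e : ∀ n, ∑ m ∈ Finset.range (n + 1), q ^ (m ^ 2 + m) * be q m * u q (n - m) =
      ∑ m ∈ Finset.range (n + 1), q ^ (3 * (m ^ 2 + m)) * al q m *
        (u q (n - m) * u q (n - m + 2 * m + 1)) := by
    intro n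
    have := bailey3 hq n
    rw [← Finset.Nat.sum_antidiagonal_swap,
      Finset.Nat.sum_antidiagonal_eq_sum_range_succ_mk, ← Finset.Nat.sum_antidiagonal_swap,
      Finset.Nat.sum_antidiagonal_eq_sum_range_succ_mk] at this
    simp only [Prod.swap] at this
    convert this using 2
    · ring
    · ring
  have h := tendsto_nhds_unique (t1.congr e) t2
  field_simp at h
  exact h

/-- Zero extension of `u` to the integers. -/
noncomputable def U (p : ℂ) (k : ℤ) : ℂ := if 0 ≤ k then u p k.toNat else 0

lemma U_neg (p : ℂ) {k : ℤ} (hk : k < 0) : U p k = 0 := if_neg (by omega)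

lemma U_rec {p : ℂ} (hp : ‖p‖ < 1) (k : ℤ) : (1 - p ^ k.toNat) * U p k = U p (k - 1) := by
  rcases lt_trichotomy k 0 with h | h | h
  · rw [U_neg p h, U_neg p (by omega), mul_zero]
  · subst h
    rw [U_neg p (show (0 : ℤ) - 1 < 0 by omega)]
    simp
  · obtain ⟨m, rfl⟩ : ∃ m : ℕ, k = (m : ℤ) + 1 := ⟨(k - 1).toNat, by omega⟩
    unfold U
    rw [if_pos (by omega), if_pos (by omega), show ((m : ℤ) + 1).toNat = m + 1 by omega,
      show ((m : ℤ) + 1 - 1).toNat = m by omega]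
    exact u_succ hp m

def tri (j : ℤ) : ℕ := (j * (j + 1) / 2).toNat

lemma two_tri (j : ℤ) : 2 * (tri j : ℤ) = j * (j + 1) := by
  have h1 : 0 ≤ j * (j + 1) := by
    rcases le_or_gt 0 j with h | h
    · positivity
    · nlinarith
  have h2 : j * (j + 1) % 2 = 0 := Int.even_iff.mp (Int.even_mul_succ_self j)
  unfold tri
  omega

noncomputable def aa (y z : ℂ) (j : ℤ) : ℂ := (-1) ^ j * y ^ tri j * z ^ tri (j - 1)

lemma aa_up (y z : ℂ) (n : ℕ) (j : ℤ) (h : j ≤ n) :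
    aa y z (j + 1) * (z * y) ^ ((n : ℤ) - j).toNat = -(y * (z * y) ^ n) * aa y z j := by
  unfold aa
  have hj : (j + 1 - 1 : ℤ) = j := by ring
  have e1 : tri (j + 1) + ((n : ℤ) - j).toNat = 1 + n + tri j := by
    have h1 := two_tri (j + 1)
    have h2 := two_tri j
    zify
    rw [Int.toNat_of_nonneg (by omega)]
    linarith
  have e2 : tri j + ((n : ℤ) - j).toNat = n + tri (j - 1) := by
    have h1 := two_tri (j - 1)
    have h2 := two_tri j
    zify
    rw [Int.toNat_of_nonneg (by omega)]
    linarith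
  rw [hj, zpow_add_one₀ (by norm_num), mul_pow, mul_pow]
  calc _ = -(-1) ^ j * (y ^ (tri (j + 1) + ((n : ℤ) - j).toNat)) *
        (z ^ (tri j + ((n : ℤ) - j).toNat)) := by rw [pow_add, pow_add]; ring
    _ = _ := by rw [e1, e2]; ring

lemma aa_down (y z : ℂ) (n : ℕ) (j : ℤ) (h : 0 ≤ n + j) :
    aa y z (j - 1) * (z * y) ^ ((n : ℤ) + j).toNat = -(z * (z * y) ^ n) * aa y z j := by
  unfold aa
  have e1 : tri (j - 1) + ((n : ℤ) + j).toNat = n + tri j := by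
    have h1 := two_tri (j - 1)
    have h2 := two_tri j
    zify
    rw [Int.toNat_of_nonneg (by omega)]
    linarith
  have e2 : tri (j - 1 - 1) + ((n : ℤ) + j).toNat = 1 + n + tri (j - 1) := by
    have h1 := two_tri (j - 1)
    have h2 := two_tri (j - 1 - 1)
    zify
    rw [Int.toNat_of_nonneg (by omega)]
    linarith
  rw [zpow_sub_one₀ (by norm_num), mul_pow, mul_pow]
  calc _ = -(-1) ^ j * (y ^ (tri (j - 1) + ((n : ℤ) + j).toNat)) *
        (z ^ (tri (j - 1 - 1) + ((n : ℤ) + j).toNat)) := by rw [pow_add, pow_add]; norm_num; ring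
    _ = _ := by rw [e1, e2]; ring

lemma UU_split {p : ℂ} (hp : ‖p‖ < 1) (M : ℕ) (a b : ℤ) (hab : a + b = M) :
    (1 - p ^ M) * (U p a * U p b) =
      U p (a - 1) * U p b + p ^ a.toNat * (U p a * U p (b - 1)) := by
  rcases lt_or_ge a 0 with h | h
  · rw [U_neg p h, U_neg p (show a - 1 < 0 by omega)]; ring
  rcases lt_or_ge b 0 with h' | h'
  · rw [U_neg p h', U_neg p (show b - 1 < 0 by omega)]; ring
  rw [← U_rec hp a, ← U_rec hp b, show M = a.toNat + b.toNat by omega, pow_add]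
  ring

noncomputable def EE (y z : ℂ) (n : ℕ) : ℂ :=
  ∑' j : ℤ, aa y z j * (U (z * y) (n - j) * U (z * y) (n + j))

noncomputable def OO (y z : ℂ) (n : ℕ) : ℂ :=
  ∑' j : ℤ, aa y z j * (U (z * y) (n - j) * U (z * y) (n + j + 1))

lemma fin_summable (f : ℤ → ℂ) (n : ℕ) (h : ∀ j : ℤ, (n : ℤ) < j ∨ (n : ℤ) + j + 1 < 0 → f j = 0) :
    Summable f := by
  refine summable_of_ne_finset_zero (s := Finset.Icc (-(n + 1) : ℤ) n) ?_
  intro j hj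
  apply h
  simp only [Finset.mem_Icc, not_and_or, not_le] at hj
  omega

lemma OO_step {y z : ℂ} (hp : ‖z * y‖ < 1) (n : ℕ) :
    (1 - (z * y) ^ (2 * n + 1)) * OO y z n = (1 - z * (z * y) ^ n) * EE y z n := by
  set p := z * y with hpd
  have hs : ∀ j : ℤ, (1 - p ^ (2 * n + 1)) * (aa y z j * (U p (n - j) * U p (n + j + 1))) =
      aa y z j * (U p (n - j) * U p (n + j)) +
      aa y z j * (p ^ ((n : ℤ) + j + 1).toNat * (U p (n + j + 1) * U p (n - j - 1))) := by
    intro j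
    have := UU_split hp (2 * n + 1) (n + j + 1) (n - j) (by push_cast; ring)
    rw [show (n : ℤ) + j + 1 - 1 = n + j by ring] at this
    linear_combination (aa y z j) * this
  have s1 : Summable fun j : ℤ => aa y z j * (U p (n - j) * U p (n + j)) := by
    refine fin_summable _ n fun j hj => ?_
    rcases hj with hj | hj
    · rw [U_neg p (show (n : ℤ) - j < 0 by omega)]; ring
    · rw [U_neg p (show (n : ℤ) + j < 0 by omega)]; ring
  have s2 : Summable fun j : ℤ =>
      aa y z j * (p ^ ((n : ℤ) + j + 1).toNat * (U p (n + j + 1) * U p (n - j - 1))) := by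
    refine fin_summable _ n fun j hj => ?_
    rcases hj with hj | hj
    · rw [U_neg p (show (n : ℤ) - j - 1 < 0 by omega)]; ring
    · rw [U_neg p (show (n : ℤ) + j + 1 < 0 by omega)]; ring
  have h2 : ∑' j : ℤ,
      aa y z j * (p ^ ((n : ℤ) + j + 1).toNat * (U p (n + j + 1) * U p (n - j - 1))) =
      -(z * p ^ n) * EE y z n := by
    rw [← (Equiv.subRight (1 : ℤ)).tsum_eq, EE, ← tsum_mul_left, ← hpd]
    refine tsum_congr fun j => ?_
    simp only [Equiv.subRight_apply]
    rw [show (n : ℤ) + (j - 1) + 1 = n + j by ring, show (n : ℤ) - (j - 1) - 1 = n - j by ring]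
    rcases lt_or_ge ((n : ℤ) + j) 0 with h | h
    · rw [U_neg p h]; ring
    · have := aa_down y z n j h
      rw [← hpd] at this
      linear_combination (U p (n + j) * U p (n - j)) * this
  rw [OO, ← tsum_mul_left, tsum_congr hs, s1.tsum_add s2, h2, EE]
  ring

lemma EE_step {y z : ℂ} (hp : ‖z * y‖ < 1) (n : ℕ) :
    (1 - (z * y) ^ (2 * n + 2)) * EE y z (n + 1) = (1 - y * (z * y) ^ n) * OO y z n := by
  set p := z * y with hpd
  have hs : ∀ j : ℤ, (1 - p ^ (2 * n + 2)) *
      (aa y z j * (U p ((n + 1 : ℕ) - j) * U p ((n + 1 : ℕ) + j))) =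
      aa y z j * (U p (n - j) * U p (n + j + 1)) +
      aa y z j * (p ^ ((n : ℤ) + 1 - j).toNat * (U p (n + 1 - j) * U p (n + j))) := by
    intro j
    have := UU_split hp (2 * n + 2) (n + 1 - j) (n + 1 + j) (by push_cast; ring)
    rw [show (n : ℤ) + 1 - j - 1 = n - j by ring, show (n : ℤ) + 1 + j - 1 = n + j by ring] at this
    push_cast
    rw [show (n : ℤ) + j + 1 = n + 1 + j by ring]
    linear_combination (aa y z j) * this
  have s1 : Summable fun j : ℤ => aa y z j * (U p (n - j) * U p (n + j + 1)) := by
    refine fin_summable _ n fun j hj => ?_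
    rcases hj with hj | hj
    · rw [U_neg p (show (n : ℤ) - j < 0 by omega)]; ring
    · rw [U_neg p (show (n : ℤ) + j + 1 < 0 by omega)]; ring
  have s2 : Summable fun j : ℤ =>
      aa y z j * (p ^ ((n : ℤ) + 1 - j).toNat * (U p (n + 1 - j) * U p (n + j))) := by
    refine fin_summable _ (n + 1) fun j hj => ?_
    rcases hj with hj | hj
    · rw [U_neg p (show (n : ℤ) + 1 - j < 0 by push_cast at hj; omega)]; ring
    · rw [U_neg p (show (n : ℤ) + j < 0 by push_cast at hj; omega)]; ring
  have h2 : ∑' j : ℤ,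
      aa y z j * (p ^ ((n : ℤ) + 1 - j).toNat * (U p (n + 1 - j) * U p (n + j))) =
      -(y * p ^ n) * OO y z n := by
    rw [← (Equiv.addRight (1 : ℤ)).tsum_eq, OO, ← tsum_mul_left, ← hpd]
    refine tsum_congr fun j => ?_
    simp only [Equiv.coe_addRight]
    rw [show (n : ℤ) + 1 - (j + 1) = n - j by ring, show (n : ℤ) + (j + 1) = n + j + 1 by ring]
    rcases lt_or_ge ((n : ℤ) - j) 0 with h | h
    · rw [U_neg p h]; ring
    · have := aa_up y z n j (by omega)
      rw [← hpd] at this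
      linear_combination (U p (n - j) * U p (n + j + 1)) * this
  rw [EE, ← tsum_mul_left, ← hpd, tsum_congr hs, s1.tsum_add s2, h2, OO]
  ring

lemma EE_closed {y z : ℂ} (hp : ‖z * y‖ < 1) (n : ℕ) :
    EE y z n = u (z * y) (2 * n) * (∏ i ∈ Finset.range n, (1 - z * (z * y) ^ i)) *
      ∏ i ∈ Finset.range n, (1 - y * (z * y) ^ i) := by
  induction n with
  | zero =>
    rw [EE, tsum_eq_single 0]
    · simp [aa, tri, U, u_zero]
    · intro j hj
      rcases lt_or_gt_of_ne hj with h | h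
      · rw [U_neg _ (show ((0 : ℕ) : ℤ) + j < 0 by push_cast; omega)]; ring
      · rw [U_neg _ (show ((0 : ℕ) : ℤ) - j < 0 by push_cast; omega)]; ring
  | succ n ih =>
    have h1 := OO_step hp n
    have h2 := EE_step hp n
    have n1 := one_sub_ne hp (2 * n)
    have n2 := one_sub_ne hp (2 * n + 1)
    have u1 := u_succ hp (2 * n)
    have u2 := u_succ hp (2 * n + 1)
    apply mul_left_cancel₀ n1
    apply mul_left_cancel₀ n2
    rw [Finset.prod_range_succ, Finset.prod_range_succ, show 2 * (n + 1) = 2 * n + 1 + 1 by ring]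
    rw [ih, ← u1, ← u2] at h1
    linear_combination (1 - (z * y) ^ (2 * n + 1)) * h2 + (1 - y * (z * y) ^ n) * h1

lemma aa_summable {y z : ℂ} (hy : ‖y‖ < 1) (hz : ‖z‖ < 1) : Summable fun j : ℤ => ‖aa y z j‖ := by
  have b : ∀ j : ℤ, ‖aa y z j‖ = ‖y ^ tri j‖ * ‖z ^ tri (j - 1)‖ := by
    intro j; unfold aa; simp
  have o : ∀ {w : ℂ}, ‖w‖ < 1 → ∀ n : ℕ, ‖w ^ n‖ ≤ 1 := by
    intro w hw n
    simpa using norm_pow_le hw (Nat.zero_le n)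
  refine Summable.of_nat_of_neg_add_one ?_ ?_
  · refine Summable.of_nonneg_of_le (fun _ => norm_nonneg _) (fun m => ?_) (summable_geo hy)
    rw [b]
    have h1 : m ≤ tri m := by
      have := two_tri m
      zify; nlinarith [sq_nonneg ((m : ℤ)), Int.natCast_nonneg m,
        Int.le_self_sq (m : ℤ)]
    have := norm_pow_le hy h1
    nlinarith [o hz (tri ((m : ℤ) - 1)), norm_nonneg (y ^ tri m), norm_nonneg (z ^ tri ((m : ℤ) - 1))]
  · refine Summable.of_nonneg_of_le (fun _ => norm_nonneg _) (fun m => ?_) (summable_geo hz)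
    rw [b]
    have h1 : m ≤ tri (-((m : ℤ) + 1) - 1) := by
      have := two_tri (-((m : ℤ) + 1) - 1)
      zify; nlinarith [sq_nonneg ((m : ℤ)), Int.natCast_nonneg m]
    have := norm_pow_le hz h1
    nlinarith [o hy (tri (-((m : ℤ) + 1))), norm_nonneg (y ^ tri (-((m : ℤ) + 1))),
      norm_nonneg (z ^ tri (-((m : ℤ) + 1) - 1))]

lemma jtp {y z : ℂ} (hy : ‖y‖ < 1) (hz : ‖z‖ < 1) :
    ∑' j : ℤ, aa y z j = phi (z * y) * (∏' i : ℕ, (1 - z * (z * y) ^ i)) *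
      ∏' i : ℕ, (1 - y * (z * y) ^ i) := by
  have hp : ‖z * y‖ < 1 := by
    rw [norm_mul]; exact mul_lt_one_of_nonneg_of_lt_one_left (norm_nonneg _) hz hy.le
  obtain ⟨C, hC, hu⟩ := u_bdd hp
  have hU : ∀ k, ‖U (z * y) k‖ ≤ C := by
    intro k; unfold U; split_ifs
    · exact hu _
    · simpa using hC.le
  have hUt : ∀ f : ℕ → ℤ, Tendsto f atTop atTop →
      Tendsto (fun n => U (z * y) (f n)) atTop (𝓝 (phi (z * y))⁻¹) := by
    intro f hf
    have h1 : Tendsto (fun n => u (z * y) (f n).toNat) atTop (𝓝 (phi (z * y))⁻¹) :=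
      (tendsto_u hp).comp (tendsto_atTop.mpr fun b => by
        filter_upwards [hf.eventually_ge_atTop (b : ℤ)] with n hn
        omega)
    refine h1.congr' ?_
    filter_upwards [hf.eventually_ge_atTop 0] with n hn
    unfold U
    rw [if_pos hn]
  have t1 : Tendsto (EE y z) atTop
      (𝓝 (∑' j : ℤ, aa y z j * ((phi (z * y))⁻¹ * (phi (z * y))⁻¹))) := by
    refine tendsto_tsum_of_dominated_convergence (bound := fun j => ‖aa y z j‖ * (C * C))
      ((aa_summable hy hz).mul_right _) ?_ ?_
    · intro j
      refine ((hUt _ ?_).mul (hUt _ ?_)).const_mul _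
      · exact tendsto_atTop_add_const_right _ (-j) tendsto_natCast_atTop_atTop
      · exact tendsto_atTop_add_const_right _ j tendsto_natCast_atTop_atTop
    · refine Eventually.of_forall fun n j => ?_
      rw [norm_mul, norm_mul]
      gcongr
      · exact hU _
      · exact hU _
  have t2 : Tendsto (EE y z) atTop (𝓝 ((phi (z * y))⁻¹ * (∏' i : ℕ, (1 - z * (z * y) ^ i)) *
      ∏' i : ℕ, (1 - y * (z * y) ^ i))) := by
    refine Tendsto.congr (fun n => (EE_closed hp n).symm) ?_
    refine (Tendsto.mul ?_ (tendsto_aux hp z)).mul (tendsto_aux hp y)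
    exact (tendsto_u hp).comp (tendsto_atTop_mono (fun n => by simp only [id]; omega) tendsto_id)
  have h := tendsto_nhds_unique t1 t2
  rw [tsum_mul_right] at h
  have := phi_ne hp
  field_simp at h
  rw [h]

lemma theta {q : ℂ} (hq : ‖q‖ < 1) :
    ∑' m : ℕ, q ^ (3 * (m ^ 2 + m)) * al q m =
      phi (q ^ 7) * (∏' i : ℕ, (1 - q * (q ^ 7) ^ i)) * ∏' i : ℕ, (1 - q ^ 6 * (q ^ 7) ^ i) := by
  have hy : ‖q ^ 6‖ < 1 := by rw [norm_pow]; exact pow_lt_one₀ (norm_nonneg _) hq (by norm_num)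
  have h := jtp hy hq
  rw [show q * q ^ 6 = q ^ 7 by ring] at h
  rw [← h]
  have hs := (aa_summable hy hq).of_norm
  have s1 : Summable fun n : ℕ => aa (q ^ 6) q n := hs.comp_injective Nat.cast_injective
  have s2 : Summable fun n : ℕ => aa (q ^ 6) q (-((n : ℤ) + 1)) :=
    hs.comp_injective (i := fun n : ℕ => -((n : ℤ) + 1)) (fun a b hab => by simp at hab; exact hab)
  rw [tsum_of_nat_of_neg_add_one s1 s2, ← s1.tsum_add s2]
  refine tsum_congr fun m => ?_
  unfold aa al
  have e1 : 6 * tri m + tri ((m : ℤ) - 1) = 3 * (m ^ 2 + m) + ch m := by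
    have h1 := two_tri m
    have h2 := two_tri ((m : ℤ) - 1)
    have h3 := two_ch m
    zify at h3 ⊢
    linarith
  have e2 : 6 * tri (-((m : ℤ) + 1)) + tri (-((m : ℤ) + 1) - 1) =
      3 * (m ^ 2 + m) + ch m + (2 * m + 1) := by
    have h1 := two_tri (-((m : ℤ) + 1))
    have h2 := two_tri (-((m : ℤ) + 1) - 1)
    have h3 := two_ch m
    zify at h3 ⊢
    linarith
  rw [← pow_mul, ← pow_mul, mul_assoc ((-1 : ℂ) ^ (m : ℤ)),
    mul_assoc ((-1 : ℂ) ^ (-((m : ℤ) + 1))), ← pow_add, ← pow_add, e1, e2, zpow_neg,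
    zpow_add_one₀ (by norm_num), zpow_natCast, mul_inv, ← inv_pow]
  norm_num
  ring

noncomputable def cE (q : ℂ) (k : ℕ) : ℂ := q ^ k * u q k
noncomputable def cA (q : ℂ) (k : ℕ) : ℂ := q ^ tr k * u q k
/-- Even extension of a sequence. -/
noncomputable def ev (f : ℕ → ℂ) (n : ℕ) : ℂ := if n % 2 = 0 then f (n / 2) else 0
noncomputable def cB (q : ℂ) (j : ℕ) : ℂ := q ^ j * u q j
noncomputable def cC (q : ℂ) (j : ℕ) : ℂ := q ^ j * u (q ^ 2) j

open PowerSeries in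
lemma E_eq {q : ℂ} (hq : ‖q‖ < 1) :
    rescale q (mk (cE q)) = (1 - C q * X) * mk (cE q) := by
  ext n
  rw [coeff_rescale, coeff_mk, sub_mul, one_mul, map_sub, coeff_mk, mul_assoc, coeff_C_mul]
  cases n with
  | zero => simp
  | succ n =>
    rw [coeff_succ_X_mul, coeff_mk]
    unfold cE
    rw [← u_succ hq n]; ring

open PowerSeries in
lemma A_eq {q : ℂ} (hq : ‖q‖ < 1) :
    mk (cA q) = (1 + C q * X) * rescale q (mk (cA q)) := by
  ext n
  rw [add_mul, one_mul, map_add, mul_assoc, coeff_C_mul, coeff_rescale, coeff_mk]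
  cases n with
  | zero => simp
  | succ n =>
    rw [coeff_succ_X_mul, coeff_rescale, coeff_mk]
    unfold cA
    rw [← u_succ hq n, tr]; ring

open PowerSeries in
lemma ev_eq {q s : ℂ} (f : ℕ → ℂ) (hf : ∀ j, (1 - (q ^ 2) ^ (j + 1)) * f (j + 1) = s * f j) :
    rescale q (mk (ev f)) = (1 - C s * X ^ 2) * mk (ev f) := by
  ext n
  rw [coeff_rescale, coeff_mk, sub_mul, one_mul, map_sub, coeff_mk, mul_assoc, coeff_C_mul]
  rcases n with _ | _ | n
  · simp [coeff_X_pow_mul']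
  · simp [coeff_X_pow_mul', ev]
  · rw [show n + 1 + 1 = n + 2 from rfl, coeff_X_pow_mul, coeff_mk]
    unfold ev
    rw [show (n + 2) % 2 = n % 2 by omega, show (n + 2) / 2 = n / 2 + 1 by omega]
    split_ifs with h
    · have e : n + 2 = 2 * (n / 2 + 1) := by omega
      have := hf (n / 2)
      rw [← pow_mul, ← e] at this
      linear_combination -this
    · ring

lemma norm_sq_lt {q : ℂ} (hq : ‖q‖ < 1) : ‖q ^ 2‖ < 1 := by
  rw [norm_pow]; exact pow_lt_one₀ (norm_nonneg _) hq (by norm_num)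

open PowerSeries in
lemma C_eq {q : ℂ} (hq : ‖q‖ < 1) :
    rescale q (mk (ev (cC q))) = (1 - C q * X ^ 2) * mk (ev (cC q)) := by
  refine ev_eq _ fun j => ?_
  unfold cC
  rw [← u_succ (norm_sq_lt hq) j]; ring

open PowerSeries in
lemma B_eq {q : ℂ} (hq : ‖q‖ < 1) :
    rescale q (mk (ev (cB q))) = (1 - C q * X ^ 2) * ((1 - C (q ^ 2) * X ^ 2) * mk (ev (cB q))) := by
  ext n
  have key : (1 - C q * X ^ 2) * ((1 - C (q ^ 2) * X ^ 2) * mk (ev (cB q))) =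
      mk (ev (cB q)) - (C (q + q ^ 2) * (X ^ 2 * mk (ev (cB q)))) +
        C (q * q ^ 2) * (X ^ 4 * mk (ev (cB q))) := by
    simp only [map_add, map_mul]; ring
  rw [key, map_add, map_sub, coeff_rescale, coeff_mk, coeff_C_mul, coeff_C_mul]
  rcases n with _ | _ | _ | _ | n
  · simp [coeff_X_pow_mul']
  · simp [coeff_X_pow_mul', ev]
  · have := u_succ hq 0
    simp [coeff_X_pow_mul', ev, cB, u_zero] at this ⊢
    linear_combination (-q) * (1 + q) * this
  · simp [coeff_X_pow_mul', ev]
  · rw [show n + 1 + 1 + 1 + 1 = n + 4 from rfl, coeff_X_pow_mul (p := mk (ev (cB q))) (n := 4) (d := n),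
      show n + 4 = n + 2 + 2 from rfl, coeff_X_pow_mul, coeff_mk,
      coeff_mk]
    unfold ev
    rw [show (n + 2 + 2) % 2 = n % 2 by omega, show (n + 2 + 2) / 2 = n / 2 + 1 + 1 by omega,
      show (n + 2) % 2 = n % 2 by omega, show (n + 2) / 2 = n / 2 + 1 by omega]
    split_ifs with h
    · have e : n + 2 + 2 = 2 * (n / 2 + 1 + 1) := by omega
      unfold cB
      rw [← u_succ hq (n / 2), ← u_succ hq (n / 2 + 1), e]
      ring
    · ring

open PowerSeries in
lemma rescale_unique {q : ℂ} (hq : ‖q‖ < 1) (H D : PowerSeries ℂ) (hH : coeff 0 H = 1)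
    (hD : coeff 0 D = 0) (h : rescale q D = H * D) : D = 0 := by
  ext n
  rw [map_zero]
  induction n using Nat.strong_induction_on with
  | _ n ih =>
    rcases n with _ | n
    · exact hD
    · have h1 := congrArg (coeff (n + 1)) h
      rw [coeff_rescale, coeff_mul, Finset.Nat.sum_antidiagonal_succ,
        Finset.sum_eq_zero, add_zero] at h1
      · simp only [hH, one_mul] at h1
        have h2 : (1 - q ^ (n + 1)) * coeff (n + 1) D = 0 := by linear_combination -h1
        exact (mul_eq_zero.mp h2).resolve_left (one_sub_ne hq n)
      · intro p hp
        rw [Finset.HasAntidiagonal.mem_antidiagonal] at hp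
        rw [ih p.2 (by omega), mul_zero]

open PowerSeries in
lemma series_eq {q : ℂ} (hq : ‖q‖ < 1) :
    mk (ev (cC q)) * mk (cE q) = mk (ev (cB q)) * mk (cA q) := by
  have hne : (1 + C q * X : PowerSeries ℂ) ≠ 0 := by
    intro h
    have := congrArg (coeff 0) h
    simp at this
  have h1 : rescale q (mk (ev (cC q)) * mk (cE q)) =
      ((1 - C q * X ^ 2) * (1 - C q * X)) * (mk (ev (cC q)) * mk (cE q)) := by
    rw [map_mul, E_eq hq, C_eq hq]; ring
  have h2 : rescale q (mk (ev (cB q)) * mk (cA q)) =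
      ((1 - C q * X ^ 2) * (1 - C q * X)) * (mk (ev (cB q)) * mk (cA q)) := by
    apply mul_left_cancel₀ hne
    have hA := A_eq hq
    rw [map_mul, B_eq hq]
    calc _ = (1 - C q * X ^ 2) * ((1 - C (q ^ 2) * X ^ 2) * mk (ev (cB q))) *
          ((1 + C q * X) * rescale q (mk (cA q))) := by ring
      _ = _ := by rw [← hA, map_pow]; ring
  have h3 := rescale_unique hq ((1 - C q * X ^ 2) * (1 - C q * X))
    (mk (ev (cC q)) * mk (cE q) - mk (ev (cB q)) * mk (cA q)) (by simp)
    (by simp [ev, cB, cC, cE, cA, u_zero, tr]) (by rw [map_sub, h1, h2]; ring)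
  exact sub_eq_zero.mp h3

lemma coeff_eq {q : ℂ} (hq : ‖q‖ < 1) (N : ℕ) :
    ∑ p ∈ Finset.HasAntidiagonal.antidiagonal N, ev (cC q) p.1 * cE q p.2 =
      ∑ p ∈ Finset.HasAntidiagonal.antidiagonal N, ev (cB q) p.1 * cA q p.2 := by
  have := congrArg (PowerSeries.coeff N) (series_eq hq)
  simpa [PowerSeries.coeff_mul] using this

lemma tsum_antidiag (F : ℕ × ℕ → ℂ) (hF : Summable F) :
    ∑' a : ℕ, ∑' b : ℕ, F (a, b) =
      ∑' N : ℕ, ∑ p ∈ Finset.HasAntidiagonal.antidiagonal N, F p := by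
  rw [← hF.tsum_prod, ← (Finset.HasAntidiagonal.sigmaAntidiagonalEquivProd (A := ℕ)).tsum_eq]
  have h2 : Summable fun x => F (Finset.HasAntidiagonal.sigmaAntidiagonalEquivProd (A := ℕ) x) :=
    (Finset.HasAntidiagonal.sigmaAntidiagonalEquivProd (A := ℕ)).summable_iff.mpr hF
  rw [h2.tsum_sigma]
  refine tsum_congr fun N => ?_
  exact Finset.tsum_subtype (Finset.HasAntidiagonal.antidiagonal N) F

lemma two_inj : Function.Injective fun j : ℕ => 2 * j := fun a b h => by simp at h; exact h

lemma ev_two (f : ℕ → ℂ) (j : ℕ) : ev f (2 * j) = f j := by simp [ev]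

lemma ev_zero_of (f : ℕ → ℂ) (n : ℕ) (h : n ∉ Set.range fun j : ℕ => 2 * j) : ev f n = 0 := by
  unfold ev
  rw [if_neg]
  intro hn
  exact h ⟨n / 2, by simp only; omega⟩

lemma ev_summable {f : ℕ → ℂ} (hf : Summable fun j => ‖f j‖) : Summable fun n => ‖ev f n‖ := by
  rw [← two_inj.summable_iff]
  · refine hf.congr fun j => ?_
    simp only [Function.comp, ev_two]
  · intro n hn
    rw [ev_zero_of f n hn, norm_zero]

lemma ev_tsum (f g : ℕ → ℂ) : ∑' n, ev f n * g n = ∑' j, f j * g (2 * j) := by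
  rw [← two_inj.tsum_eq (f := fun n => ev f n * g n)]
  · simp only [ev_two]
  · intro n hn
    by_contra h
    exact hn (by simp only [ev_zero_of f n h, zero_mul])

lemma rearr {q : ℂ} (hq : ‖q‖ < 1) {f g : ℕ → ℂ} (hf : Summable fun j => ‖f j‖)
    (hg : Summable fun j => ‖g j‖) :
    ∑' j : ℕ, f j * ∑' k : ℕ, g k * q ^ tr (2 * j + k) =
      ∑' N : ℕ, q ^ tr N * ∑ p ∈ Finset.HasAntidiagonal.antidiagonal N, ev f p.1 * g p.2 := by
  rw [← ev_tsum f (fun n => ∑' k : ℕ, g k * q ^ tr (n + k))]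
  have hs : Summable fun p : ℕ × ℕ => ev f p.1 * (g p.2 * q ^ tr (p.1 + p.2)) := by
    refine Summable.of_norm_bounded
      ((ev_summable hf).mul_of_nonneg hg (fun _ => norm_nonneg _) (fun _ => norm_nonneg _)) ?_
    intro p
    rw [norm_mul, norm_mul]
    have : ‖q ^ tr (p.1 + p.2)‖ ≤ 1 := by simpa using norm_pow_le hq (Nat.zero_le (tr (p.1 + p.2)))
    gcongr
    exact mul_le_of_le_one_right (norm_nonneg _) this
  have := tsum_antidiag _ hs
  simp only [← tsum_mul_left] at this ⊢
  rw [this]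
  refine tsum_congr fun N => ?_
  rw [Finset.mul_sum]
  refine Finset.sum_congr rfl fun p hp => ?_
  rw [Finset.HasAntidiagonal.mem_antidiagonal.mp hp]
  ring

lemma seq_summable {q r : ℂ} (hq : ‖q‖ < 1) (hr : ‖r‖ < 1) (e : ℕ → ℕ) (he : ∀ k, k ≤ e k) :
    Summable fun k => ‖q ^ e k * u r k‖ := by
  obtain ⟨C, hC, hu⟩ := u_bdd hr
  refine Summable.of_nonneg_of_le (fun _ => norm_nonneg _) (fun m => ?_)
    ((summable_geo hq).mul_right C)
  rw [norm_mul]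
  gcongr
  · exact norm_pow_le hq (he m)
  · exact hu _

lemma lhs_eq {q : ℂ} (hq : ‖q‖ < 1) :
    ∑' j : ℕ, q ^ (2 * j ^ 2 + 2 * j) * qPochInf (-(q ^ (2 * j + 2))) q /
      qPoch (q ^ 2) (q ^ 2) j = ∑' j : ℕ, cC q j * ∑' k : ℕ, cE q k * q ^ tr (2 * j + k) := by
  refine tsum_congr fun j => ?_
  have hw : ‖q ^ (2 * j + 1)‖ ≤ 1 := by simpa using norm_pow_le hq (Nat.zero_le (2 * j + 1))
  have h := euler hq hw
  rw [← pow_succ] at h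
  have h2 : qPoch (q ^ 2) (q ^ 2) j = (u (q ^ 2) j)⁻¹ := by
    unfold qPoch u
    rw [inv_inv]
    refine Finset.prod_congr rfl fun i _ => ?_
    ring
  rw [← h, h2, div_inv_eq_mul, mul_assoc, mul_comm _ (u (q ^ 2) j), ← tsum_mul_left,
    ← tsum_mul_left, ← tsum_mul_left]
  refine tsum_congr fun k => ?_
  unfold cC cE
  have e : tr (2 * j + k) + j + k = 2 * j ^ 2 + 2 * j + tr k + (2 * j + 1) * k := by
    have h1 := two_tr (2 * j + k)
    have h2 := two_tr k
    nlinarith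
  calc _ = q ^ (2 * j ^ 2 + 2 * j + tr k + (2 * j + 1) * k) * u (q ^ 2) j * u q k := by
        rw [pow_add q _ ((2 * j + 1) * k), pow_add q _ (tr k), pow_mul q (2 * j + 1) k]; ring
    _ = _ := by rw [← e, pow_add, pow_add]; ring

lemma rhs_eq {q : ℂ} (hq : ‖q‖ < 1) :
    ∑' j : ℕ, cB q j * ∑' k : ℕ, cA q k * q ^ tr (2 * j + k) =
      ∑' m : ℕ, q ^ (m ^ 2 + m) * be q m := by
  have hs : Summable fun p : ℕ × ℕ => cB q p.1 * (cA q p.2 * q ^ tr (2 * p.1 + p.2)) := by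
    refine Summable.of_norm_bounded
      ((seq_summable hq hq id (fun k => le_rfl)).mul_of_nonneg (seq_summable hq hq tr le_tr)
        (fun _ => norm_nonneg _) (fun _ => norm_nonneg _)) ?_
    intro p
    rw [norm_mul, norm_mul]
    have : ‖q ^ tr (2 * p.1 + p.2)‖ ≤ 1 := by
      simpa using norm_pow_le hq (Nat.zero_le (tr (2 * p.1 + p.2)))
    unfold cA cB
    simp only [id]
    gcongr
    exact mul_le_of_le_one_right (norm_nonneg _) this
  have := tsum_antidiag _ hs
  simp only [← tsum_mul_left] at this ⊢
  rw [this]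
  refine tsum_congr fun N => ?_
  unfold be
  rw [← Finset.Nat.sum_antidiagonal_swap, Finset.mul_sum]
  refine Finset.sum_congr rfl fun p hp => ?_
  rw [← Finset.HasAntidiagonal.mem_antidiagonal.mp hp]
  simp only [Prod.swap]
  unfold cA cB
  have e : p.2 + tr p.1 + tr (2 * p.2 + p.1) = (p.1 + p.2) ^ 2 + (p.1 + p.2) + (p.2 ^ 2 + p.2) := by
    have h1 := two_tr (2 * p.2 + p.1)
    have h2 := two_tr p.1
    nlinarith
  calc _ = q ^ (p.2 + tr p.1 + tr (2 * p.2 + p.1)) * u q p.1 * u q p.2 := by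
        rw [pow_add, pow_add]; ring
    _ = _ := by rw [e, pow_add]; ring

lemma sum_side {q : ℂ} (hq : ‖q‖ < 1) :
    phi q * ∑' j : ℕ, q ^ (2 * j ^ 2 + 2 * j) * qPochInf (-(q ^ (2 * j + 2))) q /
      qPoch (q ^ 2) (q ^ 2) j =
      phi (q ^ 7) * (∏' i : ℕ, (1 - q * (q ^ 7) ^ i)) * ∏' i : ℕ, (1 - q ^ 6 * (q ^ 7) ^ i) := by
  rw [← theta hq, ← bailey_limit hq, ← rhs_eq hq, lhs_eq hq,
    rearr hq (f := cC q) (g := cE q) (seq_summable hq (norm_sq_lt hq) (fun k => k) (fun k => le_rfl))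
      (seq_summable hq hq (fun k => k) (fun k => le_rfl)),
    rearr hq (f := cB q) (g := cA q) (seq_summable hq hq (fun k => k) (fun k => le_rfl)) (seq_summable hq hq tr le_tr)]
  congr 1
  exact tsum_congr fun N => by rw [coeff_eq hq N]

/-- factor kept in the product -/
noncomputable def gg (q : ℂ) (j : ℕ) : ℂ :=
  if 0 < j ∧ j % 7 ≠ 0 ∧ j % 7 ≠ 1 ∧ j % 7 ≠ 6 then 1 - q ^ j else 1

lemma gg_hasProd {q : ℂ} (hq : ‖q‖ < 1) : ∃ G : ℂ, G ≠ 0 ∧ HasProd (gg q) G := by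
  have hs : Summable fun j : ℕ => ‖gg q j - 1‖ := by
    refine Summable.of_nonneg_of_le (fun _ => norm_nonneg _) (fun m => ?_) (summable_geo hq)
    unfold gg
    split_ifs
    · simp
    · simp
  have h0 : ∀ j, 1 + (gg q j - 1) ≠ 0 := by
    intro j
    rw [add_sub_cancel]
    unfold gg
    split_ifs with h
    · obtain ⟨m, rfl⟩ : ∃ m, j = m + 1 := ⟨j - 1, by omega⟩
      exact one_sub_ne hq m
    · exact one_ne_zero
  refine ⟨_, tprod_one_add_ne_zero_of_summable h0 hs, ?_⟩
  have := (multipliable_one_add_of_summable hs).hasProd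
  simpa only [add_sub_cancel] using this

lemma fin_prod (q : ℂ) (n : ℕ) :
    ∏ i ∈ Finset.range (7 * n), (1 - q * q ^ i) =
      (∏ j ∈ Finset.range (7 * n), gg q j) * ((∏ i ∈ Finset.range n, (1 - q ^ 7 * (q ^ 7) ^ i)) *
        (∏ i ∈ Finset.range n, (1 - q * (q ^ 7) ^ i)) *
        ∏ i ∈ Finset.range n, (1 - q ^ 6 * (q ^ 7) ^ i)) := by
  induction n with
  | zero => simp
  | succ n ih =>
    rw [show 7 * (n + 1) = 7 * n + 1 + 1 + 1 + 1 + 1 + 1 + 1 by ring]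
    iterate 7 rw [Finset.prod_range_succ (fun i => 1 - q * q ^ i)]
    iterate 7 rw [Finset.prod_range_succ (fun j => gg q j)]
    rw [ih, Finset.prod_range_succ (fun i => 1 - q ^ 7 * (q ^ 7) ^ i),
      Finset.prod_range_succ (fun i => 1 - q * (q ^ 7) ^ i),
      Finset.prod_range_succ (fun i => 1 - q ^ 6 * (q ^ 7) ^ i)]
    have g0 : gg q (7 * n) = 1 := if_neg (by omega)
    have g1 : gg q (7 * n + 1) = 1 := if_neg (by omega)
    have g2 : gg q (7 * n + 1 + 1) = 1 - q ^ (7 * n + 1 + 1) := if_pos (by omega)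
    have g3 : gg q (7 * n + 1 + 1 + 1) = 1 - q ^ (7 * n + 1 + 1 + 1) := if_pos (by omega)
    have g4 : gg q (7 * n + 1 + 1 + 1 + 1) = 1 - q ^ (7 * n + 1 + 1 + 1 + 1) := if_pos (by omega)
    have g5 : gg q (7 * n + 1 + 1 + 1 + 1 + 1) = 1 - q ^ (7 * n + 1 + 1 + 1 + 1 + 1) :=
      if_pos (by omega)
    have g6 : gg q (7 * n + 1 + 1 + 1 + 1 + 1 + 1) = 1 := if_neg (by omega)
    rw [g0, g1, g2, g3, g4, g5, g6, ← pow_mul]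
    simp only [← pow_succ', ← pow_add]
    rw [show 6 + 7 * n = 7 * n + 6 by ring, show 7 + 7 * n = 7 * n + 7 by ring]
    generalize (∏ j ∈ Finset.range (7 * n), gg q j) = Z
    simp only [add_assoc, Nat.reduceAdd]
    ring

lemma prod_side {q : ℂ} (hq : ‖q‖ < 1) :
    ∏' j : {j : ℕ // 0 < j ∧ j % 7 ≠ 0 ∧ j % 7 ≠ 1 ∧ j % 7 ≠ 6}, (1 - q ^ (j : ℕ))⁻¹ =
      phi (q ^ 7) * (∏' i : ℕ, (1 - q * (q ^ 7) ^ i)) *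
        (∏' i : ℕ, (1 - q ^ 6 * (q ^ 7) ^ i)) / phi q := by
  obtain ⟨G, hG, hP⟩ := gg_hasProd hq
  have hq7 : ‖q ^ 7‖ < 1 := by rw [norm_pow]; exact pow_lt_one₀ (norm_nonneg _) hq (by norm_num)
  have t7 : Tendsto (fun n : ℕ => 7 * n) atTop atTop :=
    tendsto_atTop_mono (fun n => by simp only [id]; omega) tendsto_id
  have h1 := (tendsto_aux hq q).comp t7
  have h2 := (hP.tendsto_prod_nat.comp t7).mul
    (((tendsto_aux hq7 (q ^ 7)).mul (tendsto_aux hq7 q)).mul (tendsto_aux hq7 (q ^ 6)))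
  have h3 := tendsto_nhds_unique (h1.congr (fun n => fin_prod q n)) h2
  rw [← phi_eq, ← phi_eq] at h3
  have hsub : ∏' j : {j : ℕ // 0 < j ∧ j % 7 ≠ 0 ∧ j % 7 ≠ 1 ∧ j % 7 ≠ 6}, (1 - q ^ (j : ℕ))⁻¹ =
      G⁻¹ := by
    have h4 := tprod_subtype {j : ℕ | 0 < j ∧ j % 7 ≠ 0 ∧ j % 7 ≠ 1 ∧ j % 7 ≠ 6}
      (fun j : ℕ => (1 - q ^ j)⁻¹)
    refine h4.trans ?_
    rw [← (hP.inv₀ hG).tprod_eq]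
    refine tprod_congr fun j => ?_
    unfold gg
    by_cases hj : 0 < j ∧ j % 7 ≠ 0 ∧ j % 7 ≠ 1 ∧ j % 7 ≠ 6
    · rw [Set.mulIndicator_of_mem (by exact hj), if_pos hj]
    · rw [Set.mulIndicator_of_notMem (by exact hj), if_neg hj, inv_one]
  have hp := phi_ne hq
  rw [hsub, eq_div_iff hp, h3]
  field_simp

end RS

/-- The first Rogers–Selberg identity (mod 7). -/
theorem rogers_selberg_first (q : ℂ) (hq : ‖q‖ < 1) :
    ∑' j : ℕ, q ^ (2 * j ^ 2 + 2 * j) * qPochInf (-(q ^ (2 * j + 2))) q / qPoch (q ^ 2) (q ^ 2) j =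
      ∏' j : {j : ℕ // 0 < j ∧ j % 7 ≠ 0 ∧ j % 7 ≠ 1 ∧ j % 7 ≠ 6},
        (1 - q ^ (j : ℕ))⁻¹ := by
  rw [RS.prod_side hq, ← RS.sum_side hq]
  have := RS.phi_ne hq
  field_simp
end

section
/- For every complex number q with |q| < 1, the sum over all nonnegative integers j of q^(2j^2+2j) · (-q^(2j+1); q)_∞ / ((q^2; q^2)_j) equals the product over all positive integers j with j not congruent to 0, 2, or -2 modulo 7 of 1/(1 - q^j). -/
open Filter Topology

namespace RS

lemma norm_pow_summable (a p : ℂ) (hp : ‖p‖ < 1) : Summable fun h : ℕ => ‖-(a * p ^ h)‖ := by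
  simp only [norm_neg, norm_mul, norm_pow]
  exact (summable_geometric_of_lt_one (norm_nonneg _) hp).mul_left _

lemma mult (a p : ℂ) (hp : ‖p‖ < 1) : Multipliable fun h : ℕ => (1 - a * p ^ h) := by
  simpa [sub_eq_add_neg] using multipliable_one_add_of_summable (norm_pow_summable a p hp)

lemma qPoch_tendsto (a p : ℂ) (hp : ‖p‖ < 1) :
    Tendsto (fun n => qPoch a p n) atTop (𝓝 (qPochInf a p)) :=
  (mult a p hp).tendsto_prod_tprod_nat

lemma factor_ne (a p : ℂ) (ha : ‖a‖ < 1) (hp : ‖p‖ < 1) (h : ℕ) : 1 - a * p ^ h ≠ 0 := by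
  intro h0
  have h1 : a * p ^ h = 1 := (sub_eq_zero.mp h0).symm
  have h2 : ‖a * p ^ h‖ < 1 := by
    rw [norm_mul, norm_pow]
    calc ‖a‖ * ‖p‖ ^ h ≤ ‖a‖ * 1 := by
          gcongr
          exact pow_le_one₀ (norm_nonneg _) hp.le
      _ < 1 := by simpa using ha
  rw [h1] at h2
  simp at h2

lemma qPochInf_ne (a p : ℂ) (ha : ‖a‖ < 1) (hp : ‖p‖ < 1) : qPochInf a p ≠ 0 := by
  have := tprod_one_add_ne_zero_of_summable (f := fun h : ℕ => -(a * p ^ h))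
    (fun h => by simpa [sub_eq_add_neg] using factor_ne a p ha hp h) (norm_pow_summable a p hp)
  simpa [qPochInf, sub_eq_add_neg] using this

lemma qPoch_ne (a p : ℂ) (ha : ‖a‖ < 1) (hp : ‖p‖ < 1) (n : ℕ) : qPoch a p n ≠ 0 :=
  Finset.prod_ne_zero_iff.mpr fun h _ => factor_ne a p ha hp h

lemma qPoch_succ (a p : ℂ) (n : ℕ) : qPoch a p (n + 1) = qPoch a p n * (1 - a * p ^ n) :=
  Finset.prod_range_succ _ _

lemma qPoch_zero (a p : ℂ) : qPoch a p 0 = 1 := by simp [qPoch]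

lemma bdd_of_tendsto {u : ℕ → ℂ} {l : ℂ} (h : Tendsto u atTop (𝓝 l)) :
    ∃ K : ℝ, 0 < K ∧ ∀ n, ‖u n‖ ≤ K := by
  obtain ⟨K, hK⟩ := h.norm.bddAbove_range
  refine ⟨max K 1, by positivity, fun n => le_max_of_le_left (hK ⟨n, rfl⟩)⟩

lemma qPoch_bdd (a p : ℂ) (hp : ‖p‖ < 1) :
    ∃ K : ℝ, 0 < K ∧ ∀ n, ‖qPoch a p n‖ ≤ K := bdd_of_tendsto (qPoch_tendsto a p hp)

lemma qPoch_inv_tendsto (a p : ℂ) (ha : ‖a‖ < 1) (hp : ‖p‖ < 1) :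
    Tendsto (fun n => (qPoch a p n)⁻¹) atTop (𝓝 (qPochInf a p)⁻¹) :=
  (qPoch_tendsto a p hp).inv₀ (qPochInf_ne a p ha hp)

lemma qPoch_inv_bdd (a p : ℂ) (ha : ‖a‖ < 1) (hp : ‖p‖ < 1) :
    ∃ K : ℝ, 0 < K ∧ ∀ n, ‖(qPoch a p n)⁻¹‖ ≤ K := bdd_of_tendsto (qPoch_inv_tendsto a p ha hp)

lemma qPochInf_step (a p : ℂ) (hp : ‖p‖ < 1) :
    qPochInf a p = (1 - a) * qPochInf (a * p) p := by
  have h := tprod_eq_zero_mul' (f := fun h : ℕ => 1 - a * p ^ h)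
    (by simpa [pow_succ', mul_assoc] using mult (a * p) p hp)
  simpa [qPochInf, pow_succ', mul_assoc] using h

lemma qPochInf_split (a p : ℂ) (hp : ‖p‖ < 1) (n : ℕ) :
    qPochInf a p = qPoch a p n * qPochInf (a * p ^ n) p := by
  induction n with
  | zero => simp [qPoch]
  | succ n ih => rw [ih, qPochInf_step (a * p ^ n) p hp, qPoch_succ, pow_succ]; ring_nf

lemma qPochInf_tail (a p : ℂ) (ha : ‖a‖ < 1) (hp : ‖p‖ < 1) :
    Tendsto (fun n : ℕ => qPochInf (a * p ^ n) p) atTop (𝓝 1) := by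
  have h := (qPoch_inv_tendsto a p ha hp).mul_const (qPochInf a p)
  rw [inv_mul_cancel₀ (qPochInf_ne a p ha hp)] at h
  refine h.congr fun n => ?_
  rw [qPochInf_split a p hp n, inv_mul_cancel_left₀ (qPoch_ne a p ha hp n)]

lemma choose_two_succ (n : ℕ) : (n + 1).choose 2 = n + n.choose 2 := by
  rw [Nat.choose_succ_succ' n 1, Nat.choose_one_right]

/-! ### Euler -/

/-- Term of Euler's expansion. -/
noncomputable def eu (p z : ℂ) (n : ℕ) : ℂ :=
  (-1) ^ n * p ^ (n.choose 2) * z ^ n * (qPoch p p n)⁻¹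

lemma eu_bound (p y : ℂ) (hp : ‖p‖ < 1) :
    ∃ K : ℝ, 0 < K ∧ ∀ z : ℂ, ‖z‖ ≤ ‖y‖ → ∀ n, ‖eu p z n‖ ≤ K * ‖y‖ ^ n := by
  obtain ⟨K, hK, hb⟩ := qPoch_inv_bdd p p hp hp
  refine ⟨K, hK, fun z hz n => ?_⟩
  unfold eu
  rw [norm_mul, norm_mul, norm_mul, norm_pow, norm_pow, norm_pow, norm_neg, norm_one, one_pow,
    one_mul, mul_comm K]
  have h1 : ‖p‖ ^ n.choose 2 ≤ 1 := pow_le_one₀ (norm_nonneg _) hp.le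
  have h2 : ‖z‖ ^ n ≤ ‖y‖ ^ n := by gcongr
  calc _ ≤ 1 * ‖y‖ ^ n * K := by
        gcongr
        exact hb n
    _ = _ := by ring

lemma eu_summable (p z : ℂ) (hp : ‖p‖ < 1) (hz : ‖z‖ < 1) : Summable (eu p z) := by
  obtain ⟨K, hK, hb⟩ := eu_bound p z hp
  exact Summable.of_norm_bounded ((summable_geometric_of_lt_one (norm_nonneg _) hz).mul_left K)
    (hb z le_rfl)

lemma eu_step (p z : ℂ) (hp : ‖p‖ < 1) (hz : ‖z‖ < 1) :
    ∑' n, eu p z n = (1 - z) * ∑' n, eu p (z * p) n := by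
  have hz' : ‖z * p‖ < 1 := by
    rw [norm_mul]; exact mul_lt_one_of_nonneg_of_lt_one_left (norm_nonneg _) hz hp.le
  have s1 := eu_summable p z hp hz
  have s2 := eu_summable p (z * p) hp hz'
  have key : ∀ n, eu p z (n + 1) = eu p (z * p) (n + 1) - z * eu p (z * p) n := by
    intro n
    have h1 := qPoch_ne p p hp hp n
    have h2 := factor_ne p p hp hp n
    unfold eu
    rw [qPoch_succ, choose_two_succ]
    field_simp
    ring
  rw [s1.tsum_eq_zero_add]
  simp_rw [key]
  rw [((summable_nat_add_iff 1).mpr s2).tsum_sub (s2.mul_left z), tsum_mul_left, sub_mul, one_mul]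
  conv_rhs => enter [1]; rw [s2.tsum_eq_zero_add]
  have : eu p z 0 = eu p (z * p) 0 := by simp [eu]
  rw [this]; ring

lemma euler_s3 (p y : ℂ) (hp : ‖p‖ < 1) (hy : ‖y‖ < 1) : ∑' n, eu p y n = qPochInf y p := by
  have hyM : ∀ M : ℕ, ‖y * p ^ M‖ ≤ ‖y‖ := by
    intro M
    rw [norm_mul, norm_pow]
    exact mul_le_of_le_one_right (norm_nonneg _) (pow_le_one₀ (norm_nonneg _) hp.le)
  have h1 : ∀ M : ℕ, ∑' n, eu p y n = qPoch y p M * ∑' n, eu p (y * p ^ M) n := by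
    intro M
    induction M with
    | zero => simp [qPoch]
    | succ M ih =>
      rw [ih, eu_step p (y * p ^ M) hp ((hyM M).trans_lt hy), qPoch_succ, pow_succ]
      ring_nf
  obtain ⟨K, hK, hb⟩ := eu_bound p y hp
  have hp0 : Tendsto (fun M : ℕ => y * p ^ M) atTop (𝓝 0) := by
    simpa using (tendsto_pow_atTop_nhds_zero_of_norm_lt_one hp).const_mul y
  have h2 : Tendsto (fun M : ℕ => ∑' n, eu p (y * p ^ M) n) atTop
      (𝓝 (∑' n, if n = 0 then (1 : ℂ) else 0)) := by
    refine tendsto_tsum_of_dominated_convergence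
      ((summable_geometric_of_lt_one (norm_nonneg _) hy).mul_left K) (fun n => ?_)
      (Eventually.of_forall fun M n => hb _ (hyM M) n)
    have : Tendsto (fun M : ℕ => eu p (y * p ^ M) n) atTop (𝓝 (eu p 0 n)) := by
      unfold eu
      exact ((hp0.pow n).const_mul _).mul_const _
    convert this using 2
    rcases n with _ | n
    · simp [eu, qPoch]
    · simp [eu]
  rw [tsum_ite_eq] at h2
  have h3 := (qPoch_tendsto y p hp).mul h2
  rw [mul_one] at h3
  exact tendsto_nhds_unique (tendsto_const_nhds.congr h1) h3

/-! ### Jacobi triple product -/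

/-- Terms of the theta series. -/
noncomputable def th (x y p : ℂ) : ℤ → ℂ
  | Int.ofNat n => (-1) ^ n * p ^ (n.choose 2) * y ^ n
  | Int.negSucc n => (-1) ^ (n + 1) * p ^ ((n + 1).choose 2) * x ^ (n + 1)

/-- Reciprocal of the finite symbol, extended by zero. -/
noncomputable def rz (p : ℂ) : ℤ → ℂ
  | Int.ofNat n => (qPoch p p n)⁻¹
  | Int.negSucc _ => 0

lemma th_nat (x y p : ℂ) (n : ℕ) : th x y p (n : ℤ) = (-1) ^ n * p ^ (n.choose 2) * y ^ n := rfl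

lemma th_neg (x y p : ℂ) (n : ℕ) : th x y p (-(n : ℤ)) = (-1) ^ n * p ^ (n.choose 2) * x ^ n := by
  rcases n with _ | n
  · have := th_nat x y p 0
    simpa using this
  · rfl

lemma rz_nat (p : ℂ) (n : ℕ) : rz p (n : ℤ) = (qPoch p p n)⁻¹ := rfl

lemma rz_neg (p : ℂ) (n : ℤ) (hn : n < 0) : rz p n = 0 := by
  obtain ⟨k, rfl⟩ := Int.eq_negSucc_of_lt_zero hn
  rfl

lemma rz_step (p : ℂ) (hp : ‖p‖ < 1) (k : ℕ) : rz p ((k : ℤ) - 1) = rz p k * (1 - p ^ k) := by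
  rcases k with _ | k
  · rw [rz_neg p _ (by simp)]; simp
  · have : ((k + 1 : ℕ) : ℤ) - 1 = (k : ℕ) := by push_cast; ring
    rw [this, rz_nat, rz_nat, qPoch_succ, ← pow_succ']
    have h1 := qPoch_ne p p hp hp k
    have h2 := factor_ne p p hp hp k
    rw [← pow_succ'] at h2
    field_simp

lemma th_step (x y p : ℂ) (hxy : x * y = p) (n : ℤ) (N k : ℕ) (h : (k : ℤ) = N + n + 1) :
    x * p ^ N * th x y p (n + 1) = - p ^ k * th x y p n := by
  obtain ⟨m, rfl | rfl⟩ : ∃ m : ℕ, n = m ∨ n = -((m + 1 : ℕ) : ℤ) := by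
    rcases n with m | m
    · exact ⟨m, Or.inl rfl⟩
    · exact ⟨m, Or.inr rfl⟩
  · have hk : k = N + m + 1 := by exact_mod_cast h
    have : (m : ℤ) + 1 = ((m + 1 : ℕ) : ℤ) := by push_cast; ring
    rw [this, th_nat, th_nat, hk, choose_two_succ]
    calc _ = -(x * y) * p ^ N * p ^ m * ((-1) ^ m * p ^ (m.choose 2) * y ^ m) := by ring
      _ = _ := by rw [hxy]; ring
  · have hk : N = k + m := by push_cast at h; omega
    have : -((m + 1 : ℕ) : ℤ) + 1 = -((m : ℕ) : ℤ) := by push_cast; ring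
    rw [this, th_neg, th_neg, hk, choose_two_succ]
    ring

lemma th_rz (x y p : ℂ) (hp : ‖p‖ < 1) (hxy : x * y = p) (n : ℤ) (N : ℕ) :
    th x y p n * rz p ((N + 1 : ℕ) + n) =
      th x y p n * rz p (N + n) - x * p ^ N * (th x y p (n + 1) * rz p (N + (n + 1))) := by
  have e : ((N + 1 : ℕ) : ℤ) + n = N + (n + 1) := by push_cast; ring
  rw [e]
  rcases lt_or_ge ((N : ℤ) + (n + 1)) 0 with h | h
  · rw [rz_neg p _ h, rz_neg p (N + n) (by omega)]; ring
  · obtain ⟨k, hk⟩ := Int.eq_ofNat_of_zero_le h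
    have h1 := th_step x y p hxy n N k (by rw [← hk]; ring)
    have e2 : (N : ℤ) + n = (k : ℤ) - 1 := by rw [← hk]; ring
    rw [hk, e2, rz_step p hp k, ← mul_assoc (x * p ^ N), h1]
    ring

lemma th_summable (x y p : ℂ) (hp : ‖p‖ < 1) (hx : ‖x‖ < 1) (hy : ‖y‖ < 1) :
    Summable fun n => ‖th x y p n‖ := by
  have aux : ∀ z : ℂ, ‖z‖ < 1 → Summable fun n : ℕ => ‖(-1) ^ n * p ^ (n.choose 2) * z ^ n‖ := by
    intro z hz
    refine Summable.of_nonneg_of_le (fun _ => norm_nonneg _) (fun n => ?_)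
      (summable_geometric_of_lt_one (norm_nonneg _) hz)
    rw [norm_mul, norm_mul, norm_pow, norm_pow, norm_pow, norm_neg, norm_one, one_pow, one_mul]
    exact mul_le_of_le_one_left (by positivity) (pow_le_one₀ (norm_nonneg _) hp.le)
  refine Summable.of_nat_of_neg_add_one (aux y hy) ?_
  refine ((summable_nat_add_iff 1).mpr (aux x hx)).congr fun n => ?_
  have := th_neg x y p (n + 1)
  push_cast at this
  rw [this]

lemma rz_bdd (p : ℂ) (hp : ‖p‖ < 1) : ∃ K : ℝ, 0 < K ∧ ∀ n, ‖rz p n‖ ≤ K := by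
  obtain ⟨K, hK, hb⟩ := qPoch_inv_bdd p p hp hp
  refine ⟨K, hK, fun n => ?_⟩
  rcases n with n | n
  · exact hb n
  · simpa [rz] using hK.le

lemma jtp_int (x y p : ℂ) (hp : ‖p‖ < 1) (hx : ‖x‖ < 1) (hy : ‖y‖ < 1) (hxy : x * y = p) :
    ∑' n, th x y p n = qPochInf x p * qPochInf y p * qPochInf p p := by
  have hs := th_summable x y p hp hx hy
  obtain ⟨K, hK, hb⟩ := rz_bdd p hp
  have hbd : ∀ (N : ℕ) (n : ℤ), ‖th x y p n * rz p (N + n)‖ ≤ ‖th x y p n‖ * K := by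
    intro N n
    rw [norm_mul]
    gcongr
    exact hb _
  have hsum : ∀ N : ℕ, Summable fun n : ℤ => th x y p n * rz p (N + n) := fun N =>
    Summable.of_norm_bounded (hs.mul_right K) (hbd N)
  have hstep : ∀ N : ℕ, ∑' n : ℤ, th x y p n * rz p ((N + 1 : ℕ) + n) =
      (1 - x * p ^ N) * ∑' n : ℤ, th x y p n * rz p (N + n) := by
    intro N
    simp_rw [th_rz x y p hp hxy]
    have hs2 : Summable fun n : ℤ => th x y p (n + 1) * rz p (N + (n + 1)) :=
      (hsum N).comp_injective (i := fun n : ℤ => n + 1) (add_left_injective 1)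
    have hs3 : ∑' n : ℤ, th x y p (n + 1) * rz p (N + (n + 1)) =
        ∑' n : ℤ, th x y p n * rz p (N + n) :=
      (Equiv.addRight (1 : ℤ)).tsum_eq (fun n : ℤ => th x y p n * rz p (N + n))
    rw [(hsum N).tsum_sub (hs2.mul_left _), tsum_mul_left, hs3]
    ring
  have h0 : ∑' n : ℤ, th x y p n * rz p ((0 : ℕ) + n) = qPochInf y p := by
    rw [← euler_s3 p y hp hy, tsum_of_nat_of_neg_add_one]
    · have : ∀ n : ℕ, th x y p (-((n : ℤ) + 1)) * rz p ((0 : ℕ) + -((n : ℤ) + 1)) = 0 := by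
        intro n
        rw [rz_neg p _ (by push_cast; omega), mul_zero]
      simp_rw [this, tsum_zero, add_zero]
      refine tsum_congr fun n => ?_
      simp only [Nat.cast_zero, zero_add]
      rfl
    · exact (hsum 0).comp_injective Nat.cast_injective
    · refine (hsum 0).comp_injective (i := fun n : ℕ => -((n : ℤ) + 1)) fun a b h => ?_
      simpa using h
  have hN : ∀ N : ℕ, ∑' n : ℤ, th x y p n * rz p (N + n) = qPoch x p N * qPochInf y p := by
    intro N
    induction N with
    | zero => rw [h0, qPoch_zero, one_mul]
    | succ N ih => rw [hstep, ih, qPoch_succ]; ring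
  have hlim : Tendsto (fun N : ℕ => ∑' n : ℤ, th x y p n * rz p (N + n)) atTop
      (𝓝 (∑' n : ℤ, th x y p n * (qPochInf p p)⁻¹)) := by
    refine tendsto_tsum_of_dominated_convergence (hs.mul_right K) (fun n => ?_)
      (Eventually.of_forall fun N n => hbd N n)
    refine Tendsto.const_mul _ ?_
    have h1 : Tendsto (fun N : ℕ => ((N : ℤ) + n).toNat) atTop atTop := by
      refine tendsto_atTop.mpr fun b => ?_
      filter_upwards [eventually_ge_atTop (b + n.natAbs)] with N hN
      omega
    refine ((qPoch_inv_tendsto p p hp hp).comp h1).congr' ?_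
    filter_upwards [eventually_ge_atTop n.natAbs] with N hN
    have : (N : ℤ) + n = (((N : ℤ) + n).toNat : ℤ) := by omega
    conv_rhs => rw [this, rz_nat]
    rfl
  have h2 := tendsto_nhds_unique hlim
    (((qPoch_tendsto x p hp).mul_const (qPochInf y p)).congr fun N => (hN N).symm)
  rw [tsum_mul_right] at h2
  rw [← h2, inv_mul_cancel_right₀ (qPochInf_ne p p hp hp)]

lemma jtp_s3 (x y p : ℂ) (hp : ‖p‖ < 1) (hx : ‖x‖ < 1) (hy : ‖y‖ < 1) (hxy : x * y = p) :
    ∑' n : ℕ, (-1) ^ n * (p ^ (n.choose 2) * y ^ n - p ^ ((n + 1).choose 2) * x ^ (n + 1)) =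
      qPochInf x p * qPochInf y p * qPochInf p p := by
  rw [← jtp_int x y p hp hx hy hxy]
  have hs : Summable (th x y p) := (th_summable x y p hp hx hy).of_norm
  have s1 : Summable fun n : ℕ => th x y p n := hs.comp_injective Nat.cast_injective
  have s2 : Summable fun n : ℕ => th x y p (-((n : ℤ) + 1)) := by
    refine hs.comp_injective (i := fun n : ℕ => -((n : ℤ) + 1)) fun a b h => ?_
    simpa using h
  rw [tsum_of_nat_of_neg_add_one s1 s2, ← s1.tsum_add s2]
  refine tsum_congr fun n => ?_
  have := th_neg x y p (n + 1)
  push_cast at this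
  rw [this, th_nat]
  ring

/-! ### Uniqueness for the functional equations -/

lemma unique_zero (q : ℂ) (hq : ‖q‖ < 1) (X1 X2 X3 : ℕ → ℂ)
    (t1 : Tendsto X1 atTop (𝓝 0)) (t2 : Tendsto X2 atTop (𝓝 0)) (t3 : Tendsto X3 atTop (𝓝 0))
    (e1 : ∀ m, X1 m = X3 (m + 1))
    (e2 : ∀ m, X2 m = X1 m + q ^ (m + 1) * X2 (m + 1))
    (e3 : ∀ m, X3 m = X2 m + q ^ (2 * (m + 1)) * X1 (m + 1)) : X2 0 = 0 := by
  set r := ‖q‖ with hr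
  have hr0 : 0 ≤ r := norm_nonneg _
  set M : ℕ → ℝ := fun m => max ‖X1 m‖ (max ‖X2 m‖ ‖X3 m‖) with hM
  have m1 : ∀ m, ‖X1 m‖ ≤ M m := fun m => le_max_left _ _
  have m2 : ∀ m, ‖X2 m‖ ≤ M m := fun m => (le_max_left _ _).trans (le_max_right _ _)
  have m3 : ∀ m, ‖X3 m‖ ≤ M m := fun m => (le_max_right _ _).trans (le_max_right _ _)
  have m0 : ∀ m, 0 ≤ M m := fun m => (norm_nonneg _).trans (m1 m)
  have tM : Tendsto M atTop (𝓝 0) := by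
    have := t1.norm.max (t2.norm.max t3.norm)
    simpa using this
  have hstep : ∀ m, M m ≤ (1 + 2 * r ^ m) * M (m + 1) := by
    intro m
    have p1 : r ^ (m + 1) ≤ r ^ m := pow_le_pow_of_le_one hr0 hq.le (by omega)
    have p2 : r ^ (2 * (m + 1)) ≤ r ^ m := pow_le_pow_of_le_one hr0 hq.le (by omega)
    have p0 : 0 ≤ r ^ m := by positivity
    have hN := m0 (m + 1)
    have b1 : ‖X1 m‖ ≤ M (m + 1) := by rw [e1]; exact m3 _
    have b2 : ‖X2 m‖ ≤ (1 + r ^ m) * M (m + 1) := by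
      rw [e2]
      calc _ ≤ ‖X1 m‖ + ‖q ^ (m + 1) * X2 (m + 1)‖ := norm_add_le _ _
        _ ≤ M (m + 1) + r ^ m * M (m + 1) := by
          rw [norm_mul, norm_pow]
          gcongr
          exact m2 _
        _ = _ := by ring
    have b3 : ‖X3 m‖ ≤ (1 + 2 * r ^ m) * M (m + 1) := by
      rw [e3]
      calc _ ≤ ‖X2 m‖ + ‖q ^ (2 * (m + 1)) * X1 (m + 1)‖ := norm_add_le _ _
        _ ≤ (1 + r ^ m) * M (m + 1) + r ^ m * M (m + 1) := by
          rw [norm_mul, norm_pow]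
          gcongr
          exact m1 _
        _ = _ := by ring
    have c : 0 ≤ r ^ m * M (m + 1) := by positivity
    refine max_le (b1.trans ?_) (max_le (b2.trans ?_) b3) <;> nlinarith
  have hk : ∀ k, M 0 ≤ Real.exp (∑ i ∈ Finset.range k, 2 * r ^ i) * M k := by
    intro k
    induction k with
    | zero => simp
    | succ k ih =>
      rw [Finset.sum_range_succ, Real.exp_add]
      calc M 0 ≤ _ := ih
        _ ≤ Real.exp (∑ i ∈ Finset.range k, 2 * r ^ i) * ((1 + 2 * r ^ k) * M (k + 1)) := by
          gcongr
          exact hstep k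
        _ ≤ Real.exp (∑ i ∈ Finset.range k, 2 * r ^ i) * (Real.exp (2 * r ^ k) * M (k + 1)) := by
          gcongr
          · linarith [Real.add_one_le_exp (2 * r ^ k)]
        _ = _ := by ring
  have hsum : Summable fun i : ℕ => 2 * r ^ i := (summable_geometric_of_lt_one hr0 hq).mul_left 2
  have hk2 : ∀ k, M 0 ≤ Real.exp (∑' i : ℕ, 2 * r ^ i) * M k := by
    intro k
    refine (hk k).trans ?_
    gcongr
    · exact hsum.sum_le_tsum _ (fun i _ => by positivity)
  have hle : M 0 ≤ 0 := by
    have := tM.const_mul (Real.exp (∑' i : ℕ, 2 * r ^ i))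
    rw [mul_zero] at this
    exact ge_of_tendsto' this hk2
  exact norm_le_zero_iff.mp ((m2 0).trans hle)

/-! ### The theta side -/

/-- Terms of the theta side. -/
noncomputable def tt (q : ℂ) (i m n : ℕ) : ℂ :=
  (-1) ^ n * q ^ (3 * m * n + 7 * n.choose 2 + (7 - i) * n) * (1 - q ^ (i * (m + 2 * n + 1))) *
    qPoch q q (m + n) * (qPoch q q n)⁻¹

lemma tt_bound (q : ℂ) (hq : ‖q‖ < 1) : ∃ K : ℝ, 0 < K ∧ ∀ i, i ≤ 3 → ∀ m n,
    ‖tt q i m n‖ ≤ K * ‖q‖ ^ ((m + 1) * n) := by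
  obtain ⟨K, hK, hb⟩ := qPoch_bdd q q hq
  obtain ⟨K', hK', hb'⟩ := qPoch_inv_bdd q q hq hq
  refine ⟨2 * K * K', by positivity, fun i hi m n => ?_⟩
  unfold tt
  rw [norm_mul, norm_mul, norm_mul, norm_mul, norm_pow, norm_pow, norm_neg, norm_one, one_pow,
    one_mul]
  have h1 : ‖q‖ ^ (3 * m * n + 7 * n.choose 2 + (7 - i) * n) ≤ ‖q‖ ^ ((m + 1) * n) := by
    refine pow_le_pow_of_le_one (norm_nonneg _) hq.le ?_
    have : 1 * n ≤ (7 - i) * n := Nat.mul_le_mul_right _ (by omega)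
    nlinarith [Nat.zero_le (m * n)]
  have h2 : ‖1 - q ^ (i * (m + 2 * n + 1))‖ ≤ 2 := by
    refine (norm_sub_le _ _).trans ?_
    rw [norm_one, norm_pow]
    linarith [pow_le_one₀ (n := i * (m + 2 * n + 1)) (norm_nonneg q) hq.le]
  calc _ ≤ ‖q‖ ^ ((m + 1) * n) * 2 * K * K' := by
        gcongr
        · exact hb _
        · exact hb' _
    _ = _ := by ring

lemma tt_bound' (q : ℂ) (hq : ‖q‖ < 1) : ∃ K : ℝ, 0 < K ∧ ∀ i, i ≤ 3 → ∀ m n,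
    ‖tt q i m n‖ ≤ K * ‖q‖ ^ n := by
  obtain ⟨K, hK, hb⟩ := tt_bound q hq
  refine ⟨K, hK, fun i hi m n => (hb i hi m n).trans ?_⟩
  gcongr ?_ * ?_
  exact pow_le_pow_of_le_one (norm_nonneg _) hq.le (by nlinarith [Nat.zero_le (m * n)])

lemma tt_summable (q : ℂ) (hq : ‖q‖ < 1) (i m : ℕ) (hi : i ≤ 3) : Summable (tt q i m) := by
  obtain ⟨K, hK, hb⟩ := tt_bound' q hq
  exact Summable.of_norm_bounded ((summable_geometric_of_lt_one (norm_nonneg _) hq).mul_left K)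
    (hb i hi m)

lemma pow_linear_tendsto (q : ℂ) (hq : ‖q‖ < 1) (f : ℕ → ℕ) (hf : ∀ m, m ≤ f m) :
    Tendsto (fun m => q ^ f m) atTop (𝓝 0) :=
  (tendsto_pow_atTop_nhds_zero_of_norm_lt_one hq).comp (tendsto_atTop_mono hf tendsto_id)

lemma tt_limit (q : ℂ) (hq : ‖q‖ < 1) (i : ℕ) (hi0 : 1 ≤ i) (hi : i ≤ 3) :
    Tendsto (fun m => ∑' n, tt q i m n) atTop (𝓝 (qPochInf q q)) := by
  obtain ⟨K, hK, hb⟩ := tt_bound q hq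
  obtain ⟨K', hK', hb'⟩ := tt_bound' q hq
  have : Tendsto (fun m => ∑' n, tt q i m n) atTop
      (𝓝 (∑' n, if n = 0 then (qPochInf q q) else 0)) := by
    refine tendsto_tsum_of_dominated_convergence
      ((summable_geometric_of_lt_one (norm_nonneg _) hq).mul_left K') (fun n => ?_)
      (Eventually.of_forall fun m n => hb' i hi m n)
    rcases n with _ | n
    · simp only [tt, if_true]
      have h1 := pow_linear_tendsto q hq (fun m => i * (m + 2 * 0 + 1)) (fun m => by nlinarith)
      have h2 := (h1.const_sub 1).mul (qPoch_tendsto q q hq)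
      simpa [qPoch_zero] using h2
    · simp only [Nat.add_eq_zero_iff, one_ne_zero, and_false, if_false]
      refine squeeze_zero_norm (fun m => hb i hi m (n + 1)) ?_
      have h1 := (pow_linear_tendsto q hq (fun m => (m + 1) * (n + 1))
        (fun m => by nlinarith [Nat.zero_le (m * n)])).norm.const_mul K
      simpa [norm_pow] using h1
  rwa [tsum_ite_eq] at this

lemma tt_step (q : ℂ) (hq : ‖q‖ < 1) (i m : ℕ) (hi : i ≤ 2) :
    ∑' n, tt q (i + 1) m n =
      ∑' n, tt q i m n + q ^ (i * (m + 1)) * ∑' n, tt q (3 - i) (m + 1) n := by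
  have s1 := tt_summable q hq (i + 1) m (by omega)
  have s0 := tt_summable q hq i m (by omega)
  have s3 := tt_summable q hq (3 - i) (m + 1) (by omega)
  set U : ℕ → ℂ := fun n => (-1) ^ n * q ^ (3 * m * n + 7 * n.choose 2 + 7 * n) *
    q ^ (i * (m + n + 1)) * qPoch q q (m + n + 1) * (qPoch q q n)⁻¹ with hU
  set V : ℕ → ℂ := fun n => tt q (i + 1) m n - tt q i m n - U n with hV
  have nz := qPoch_ne q q hq hq
  have fz := factor_ne q q hq hq
  have hV0 : V 0 = 0 := by
    simp only [hV, hU, tt, qPoch_zero, qPoch_succ]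
    simp
    ring
  have hV1 : ∀ n, V (n + 1) = -((-1) ^ n * q ^ (3 * m * (n + 1) + 7 * (n + 1).choose 2 +
      (6 - i) * (n + 1)) * qPoch q q (m + n + 1) * (qPoch q q n)⁻¹) := by
    intro n
    simp only [hV, hU, tt]
    rw [← add_assoc m n 1, qPoch_succ q q (m + n + 1), qPoch_succ q q n]
    have := nz n
    have := fz n
    field_simp
    interval_cases i <;> simp <;> ring
  have hUV : ∀ n, U n + V (n + 1) = q ^ (i * (m + 1)) * tt q (3 - i) (m + 1) n := by
    intro n
    rw [hV1]
    simp only [hU, tt]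
    rw [choose_two_succ, show m + 1 + n = m + n + 1 by ring]
    interval_cases i <;> simp <;> ring
  have sU : Summable U := by
    obtain ⟨K, hK, hb⟩ := qPoch_bdd q q hq
    obtain ⟨K', hK', hb'⟩ := qPoch_inv_bdd q q hq hq
    refine Summable.of_norm_bounded
      (((summable_geometric_of_lt_one (norm_nonneg _) hq).mul_left (K * K'))) fun n => ?_
    simp only [hU]
    rw [norm_mul, norm_mul, norm_mul, norm_mul, norm_pow, norm_pow, norm_pow, norm_neg, norm_one,
      one_pow, one_mul]
    have g1 : ‖q‖ ^ (3 * m * n + 7 * n.choose 2 + 7 * n) ≤ ‖q‖ ^ n :=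
      pow_le_pow_of_le_one (norm_nonneg _) hq.le (by
        nlinarith [Nat.zero_le (m * n), Nat.zero_le (n.choose 2)])
    have g2 : ‖q‖ ^ (i * (m + n + 1)) ≤ 1 := pow_le_one₀ (norm_nonneg _) hq.le
    calc _ ≤ ‖q‖ ^ n * 1 * K * K' := by
          gcongr
          · exact hb _
          · exact hb' _
      _ = _ := by ring
  have sV : Summable V := (s1.sub s0).sub sU
  have h1 : ∑' n, V n = ∑' n, V (n + 1) := by rw [sV.tsum_eq_zero_add, hV0, zero_add]
  have h2 : ∑' n, V n = ∑' n, tt q (i + 1) m n - ∑' n, tt q i m n - ∑' n, U n := by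
    rw [← s1.tsum_sub s0, ← (s1.sub s0).tsum_sub sU]
  have h3 : ∑' n, U n + ∑' n, V (n + 1) = q ^ (i * (m + 1)) * ∑' n, tt q (3 - i) (m + 1) n := by
    rw [← sU.tsum_add ((summable_nat_add_iff 1).mpr sV), ← tsum_mul_left]
    exact tsum_congr hUV
  rw [← h3, ← h1, h2]
  ring

/-! ### The sum side -/

/-- Terms of the sum side. -/
noncomputable def ss (q : ℂ) (c b j : ℕ) : ℂ :=
  q ^ (2 * j ^ 2 + c * j) * qPochInf (-(q ^ (2 * j + b + 1))) q / qPoch (q ^ 2) (q ^ 2) j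

lemma W_tendsto (q : ℂ) (hq : ‖q‖ < 1) :
    Tendsto (fun k : ℕ => qPochInf (-(q ^ (k + 1))) q) atTop (𝓝 1) := by
  have := qPochInf_tail (-q) q (by simpa using hq) hq
  simpa [pow_succ'] using this

lemma W_step (q : ℂ) (hq : ‖q‖ < 1) (k : ℕ) :
    qPochInf (-(q ^ k)) q = (1 + q ^ k) * qPochInf (-(q ^ (k + 1))) q := by
  rw [qPochInf_step _ q hq, pow_succ]
  simp

lemma q2 (q : ℂ) (hq : ‖q‖ < 1) : ‖q ^ 2‖ < 1 := by
  rw [norm_pow]; exact pow_lt_one₀ (norm_nonneg _) hq (by norm_num)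

lemma ss_bound (q : ℂ) (hq : ‖q‖ < 1) : ∃ K : ℝ, 0 < K ∧ ∀ c b j,
    ‖ss q c b j‖ ≤ K * ‖q‖ ^ (2 * j ^ 2 + c * j) := by
  obtain ⟨K, hK, hb⟩ := bdd_of_tendsto (W_tendsto q hq)
  obtain ⟨K', hK', hb'⟩ := qPoch_inv_bdd (q ^ 2) (q ^ 2) (q2 q hq) (q2 q hq)
  refine ⟨K * K', by positivity, fun c b j => ?_⟩
  unfold ss
  rw [div_eq_mul_inv, norm_mul, norm_mul, norm_pow]
  calc _ ≤ ‖q‖ ^ (2 * j ^ 2 + c * j) * K * K' := by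
        gcongr
        · exact hb _
        · exact hb' _
    _ = _ := by ring

lemma ss_bound' (q : ℂ) (hq : ‖q‖ < 1) : ∃ K : ℝ, 0 < K ∧ ∀ c b j,
    ‖ss q c b j‖ ≤ K * ‖q‖ ^ j := by
  obtain ⟨K, hK, hb⟩ := ss_bound q hq
  refine ⟨K, hK, fun c b j => (hb c b j).trans ?_⟩
  gcongr ?_ * ?_
  refine pow_le_pow_of_le_one (norm_nonneg _) hq.le ?_
  nlinarith [Nat.zero_le (c * j), Nat.le_self_pow (two_ne_zero) j]

lemma ss_summable (q : ℂ) (hq : ‖q‖ < 1) (c b : ℕ) : Summable (ss q c b) := by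
  obtain ⟨K, hK, hb⟩ := ss_bound' q hq
  exact Summable.of_norm_bounded ((summable_geometric_of_lt_one (norm_nonneg _) hq).mul_left K)
    (hb c b)

lemma ss_limit (q : ℂ) (hq : ‖q‖ < 1) (c b : ℕ → ℕ) (hc : ∀ m, m ≤ c m) (hb : ∀ m, m ≤ b m) :
    Tendsto (fun m => ∑' j, ss q (c m) (b m) j) atTop (𝓝 1) := by
  obtain ⟨K, hK, hb1⟩ := ss_bound q hq
  obtain ⟨K', hK', hb2⟩ := ss_bound' q hq
  have : Tendsto (fun m => ∑' j, ss q (c m) (b m) j) atTop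
      (𝓝 (∑' j, if j = 0 then (1 : ℂ) else 0)) := by
    refine tendsto_tsum_of_dominated_convergence
      ((summable_geometric_of_lt_one (norm_nonneg _) hq).mul_left K') (fun j => ?_)
      (Eventually.of_forall fun m j => hb2 _ _ j)
    rcases j with _ | j
    · have h1 := (W_tendsto q hq).comp (tendsto_atTop_mono hb tendsto_id)
      simpa [ss, qPoch_zero, Function.comp_def] using h1
    · simp only [Nat.add_eq_zero_iff, one_ne_zero, and_false, if_false]
      refine squeeze_zero_norm (fun m => hb1 _ _ (j + 1)) ?_
      have h1 := (pow_linear_tendsto q hq (fun m => 2 * (j + 1) ^ 2 + c m * (j + 1))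
        (fun m => by nlinarith [hc m, Nat.zero_le (c m * j)])).norm.const_mul K
      simpa [norm_pow] using h1
  rwa [tsum_ite_eq] at this

lemma ss_step2 (q : ℂ) (hq : ‖q‖ < 1) (m : ℕ) :
    ∑' j, ss q (2 * m + 2) m j = ∑' j, ss q (2 * m + 2) (m + 1) j +
      q ^ (m + 1) * ∑' j, ss q (2 * (m + 1) + 2) (m + 1) j := by
  rw [← tsum_mul_left, ← (ss_summable q hq _ _).tsum_add ((ss_summable q hq _ _).mul_left _)]
  refine tsum_congr fun j => ?_
  unfold ss
  rw [W_step q hq (2 * j + m + 1), show 2 * j + (m + 1) + 1 = 2 * j + m + 1 + 1 by ring]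
  ring

lemma ss_step3 (q : ℂ) (hq : ‖q‖ < 1) (m : ℕ) :
    ∑' j, ss q (2 * m) m j = ∑' j, ss q (2 * m + 2) m j +
      q ^ (2 * (m + 1)) * ∑' j, ss q (2 * (m + 1) + 2) (m + 1 + 1) j := by
  have s1 := ss_summable q hq (2 * m) m
  have s2 := ss_summable q hq (2 * m + 2) m
  rw [← sub_eq_iff_eq_add', ← s1.tsum_sub s2, (s1.sub s2).tsum_eq_zero_add, ← tsum_mul_left]
  have h0 : ss q (2 * m) m 0 - ss q (2 * m + 2) m 0 = 0 := by simp [ss]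
  rw [h0, zero_add]
  refine tsum_congr fun j => ?_
  unfold ss
  rw [qPoch_succ, show 2 * (j + 1) + m + 1 = 2 * j + (m + 1 + 1) + 1 by ring]
  have h1 := qPoch_ne _ _ (q2 q hq) (q2 q hq) j
  have h2 := factor_ne _ _ (q2 q hq) (q2 q hq) j
  field_simp
  ring

lemma main_theta (q : ℂ) (hq : ‖q‖ < 1) :
    qPochInf q q * ∑' j, ss q 2 0 j = ∑' n, tt q 2 0 n := by
  set P := qPochInf q q with hP
  have lim : ∀ (i : ℕ) (c b : ℕ → ℕ), 1 ≤ i → i ≤ 3 → (∀ m, m ≤ c m) → (∀ m, m ≤ b m) →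
      Tendsto (fun m => P * ∑' j, ss q (c m) (b m) j - ∑' n, tt q i m n) atTop (𝓝 0) := by
    intro i c b h1 h2 hc hb
    have := ((ss_limit q hq c b hc hb).const_mul P).sub (tt_limit q hq i h1 h2)
    simpa [hP] using this
  have t0 : ∀ m, ∑' n, tt q 0 m n = 0 := by
    intro m
    simp [tt]
  have := unique_zero q hq
    (fun m => P * ∑' j, ss q (2 * m + 2) (m + 1) j - ∑' n, tt q 1 m n)
    (fun m => P * ∑' j, ss q (2 * m + 2) m j - ∑' n, tt q 2 m n)
    (fun m => P * ∑' j, ss q (2 * m) m j - ∑' n, tt q 3 m n)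
    (lim 1 _ _ (by norm_num) (by norm_num) (fun m => by omega) (fun m => by omega))
    (lim 2 _ _ (by norm_num) (by norm_num) (fun m => by omega) (fun m => by omega))
    (lim 3 _ _ (by norm_num) (by norm_num) (fun m => by omega) (fun m => by omega))
    (fun m => by
      have h := tt_step q hq 0 m (by norm_num)
      simp only [t0, zero_add, zero_mul, pow_zero, one_mul] at h
      simp only [h, mul_add, mul_one])
    (fun m => by
      have h := tt_step q hq 1 m (by norm_num)
      simp only [Nat.reduceAdd, Nat.reduceSub, one_mul] at h
      simp only [h, ss_step2 q hq m]
      ring)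
    (fun m => by
      have h := tt_step q hq 2 m (by norm_num)
      simp only [Nat.reduceAdd, Nat.reduceSub] at h
      simp only [h, ss_step3 q hq m]
      ring)
  simpa [sub_eq_zero] using this

lemma theta_eval (q : ℂ) (hq : ‖q‖ < 1) :
    ∑' n, tt q 2 0 n =
      qPochInf (q ^ 2) (q ^ 7) * qPochInf (q ^ 5) (q ^ 7) * qPochInf (q ^ 7) (q ^ 7) := by
  have hk : ∀ k : ℕ, k ≠ 0 → ‖q ^ k‖ < 1 := fun k hk => by
    rw [norm_pow]; exact pow_lt_one₀ (norm_nonneg _) hq hk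
  rw [← jtp_s3 (q ^ 2) (q ^ 5) (q ^ 7) (hk 7 (by norm_num)) (hk 2 (by norm_num)) (hk 5 (by norm_num))
    (by ring)]
  refine tsum_congr fun n => ?_
  unfold tt
  rw [zero_add n, mul_inv_cancel_right₀ (qPoch_ne q q hq hq n), choose_two_succ]
  simp only [mul_zero, zero_mul, zero_add, Nat.reduceSub]
  ring

/-! ### The product side -/

/-- Restricted factor. -/
noncomputable def ff (q : ℂ) (s : Set ℕ) : ℕ → ℂ := s.mulIndicator fun j => 1 - q ^ j

lemma ff_eq (q : ℂ) (s : Set ℕ) (j : ℕ) : ff q s j = 1 + s.indicator (fun j => -q ^ j) j := by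
  classical
  by_cases h : j ∈ s <;> simp [ff, h, sub_eq_add_neg]

lemma ff_summable (q : ℂ) (hq : ‖q‖ < 1) (s : Set ℕ) :
    Summable fun j => ‖s.indicator (fun j => -q ^ j) j‖ := by
  refine Summable.of_nonneg_of_le (fun _ => norm_nonneg _) (fun j => ?_)
    (summable_geometric_of_lt_one (norm_nonneg _) hq)
  refine (norm_indicator_le_norm_self _ _).trans ?_
  simp

lemma ff_mult (q : ℂ) (hq : ‖q‖ < 1) (s : Set ℕ) : Multipliable (ff q s) := by
  rw [funext (ff_eq q s)]
  exact multipliable_one_add_of_summable (ff_summable q hq s)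

lemma ff_ne (q : ℂ) (hq : ‖q‖ < 1) (s : Set ℕ) (hs : 0 ∉ s) : ∏' j, ff q s j ≠ 0 := by
  rw [funext (ff_eq q s)]
  refine tprod_one_add_ne_zero_of_summable (fun j => ?_) (ff_summable q hq s)
  rw [← ff_eq]
  by_cases h : j ∈ s
  · have hj : j ≠ 0 := fun h0 => hs (h0 ▸ h)
    have := factor_ne q q hq hq (j - 1)
    rw [← pow_succ', Nat.sub_add_cancel (by omega)] at this
    simpa [ff, h] using this
  · simp [ff, h]

lemma ff_union (q : ℂ) (hq : ‖q‖ < 1) (s t : Set ℕ) (h : Disjoint s t) :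
    ∏' j, ff q (s ∪ t) j = (∏' j, ff q s j) * ∏' j, ff q t j := by
  rw [← (ff_mult q hq s).tprod_mul (ff_mult q hq t)]
  refine tprod_congr fun j => ?_
  unfold ff
  rw [Set.mulIndicator_union_of_disjoint h]

lemma ff_prog (q : ℂ) (a d : ℕ) (hd : 0 < d) :
    ∏' j, ff q (Set.range fun h => a + d * h) j = qPochInf (q ^ a) (q ^ d) := by
  have hinj : Function.Injective fun h : ℕ => a + d * h := by
    intro x y hxy
    simpa [hd.ne'] using hxy
  rw [← hinj.tprod_eq (f := ff q (Set.range fun h => a + d * h)) Set.mulSupport_mulIndicator_subset]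
  refine tprod_congr fun h => ?_
  rw [ff, Set.mulIndicator_of_mem (Set.mem_range_self (f := fun h => a + d * h) h), pow_add, pow_mul]

lemma product_side (q : ℂ) (hq : ‖q‖ < 1) :
    (∏' j : {j : ℕ // 0 < j ∧ j % 7 ≠ 0 ∧ j % 7 ≠ 2 ∧ j % 7 ≠ 5}, (1 - q ^ (j : ℕ))⁻¹) *
      qPochInf q q =
      qPochInf (q ^ 2) (q ^ 7) * qPochInf (q ^ 5) (q ^ 7) * qPochInf (q ^ 7) (q ^ 7) := by
  set S : Set ℕ := {j : ℕ | 0 < j ∧ j % 7 ≠ 0 ∧ j % 7 ≠ 2 ∧ j % 7 ≠ 5} with hS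
  have h1 : (∏' j : {j : ℕ // 0 < j ∧ j % 7 ≠ 0 ∧ j % 7 ≠ 2 ∧ j % 7 ≠ 5}, (1 - q ^ (j : ℕ))⁻¹) =
      (∏' j, ff q S j)⁻¹ := by
    rw [← (ff_mult q hq S).tprod_inv₀ (ff_ne q hq S (by simp [hS]))]
    refine (tprod_subtype S fun j => (1 - q ^ j)⁻¹).trans (tprod_congr fun j => ?_)
    by_cases h : j ∈ S <;> simp [ff, h]
  have h2 : qPochInf q q = ∏' j, ff q (Set.range fun h => 1 + 1 * h) j := by
    rw [ff_prog q 1 1 one_pos, pow_one]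
  have hset : (Set.range fun h => 1 + 1 * h) = S ∪ ((Set.range fun h => 2 + 7 * h) ∪
      ((Set.range fun h => 5 + 7 * h) ∪ (Set.range fun h => 7 + 7 * h))) := by
    ext j
    simp only [hS, Set.mem_range, Set.mem_union, Set.mem_ofPred_eq]
    constructor
    · rintro ⟨h, rfl⟩
      by_cases a2 : (1 + 1 * h) % 7 = 2
      · exact Or.inr (Or.inl ⟨(1 + 1 * h) / 7, by omega⟩)
      by_cases a5 : (1 + 1 * h) % 7 = 5
      · exact Or.inr (Or.inr (Or.inl ⟨(1 + 1 * h) / 7, by omega⟩))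
      by_cases a7 : (1 + 1 * h) % 7 = 0
      · exact Or.inr (Or.inr (Or.inr ⟨(1 + 1 * h) / 7 - 1, by omega⟩))
      exact Or.inl ⟨by omega, a7, a2, a5⟩
    · intro h
      refine ⟨j - 1, ?_⟩
      rcases h with h | ⟨y, h⟩ | ⟨y, h⟩ | ⟨y, h⟩ <;> omega
  rw [h1, h2, hset, ff_union q hq, ff_union q hq, ff_union q hq, ff_prog q 2 7 (by norm_num),
    ff_prog q 5 7 (by norm_num), ff_prog q 7 7 (by norm_num),
    inv_mul_cancel_left₀ (ff_ne q hq S (by simp [hS])), mul_assoc]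
  · rw [Set.disjoint_left]
    rintro j ⟨x, rfl⟩ ⟨y, hy⟩
    simp only at hy
    omega
  · rw [Set.disjoint_left]
    rintro j ⟨x, rfl⟩ (⟨y, hy⟩ | ⟨y, hy⟩) <;> simp only at hy <;> omega
  · rw [Set.disjoint_left]
    rintro j ⟨_, hj⟩ (⟨y, hy⟩ | ⟨y, hy⟩ | ⟨y, hy⟩) <;> simp only at hy <;> omega

end RS

/-- The second Rogers–Selberg identity (mod 7). -/
theorem rogers_selberg_second (q : ℂ) (hq : ‖q‖ < 1) :
    ∑' j : ℕ, q ^ (2 * j ^ 2 + 2 * j) * qPochInf (-(q ^ (2 * j + 1))) q / qPoch (q ^ 2) (q ^ 2) j =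
      ∏' j : {j : ℕ // 0 < j ∧ j % 7 ≠ 0 ∧ j % 7 ≠ 2 ∧ j % 7 ≠ 5},
        (1 - q ^ (j : ℕ))⁻¹ := by
  have h1 := RS.main_theta q hq
  rw [RS.theta_eval q hq, ← RS.product_side q hq, mul_comm] at h1
  have h2 := mul_right_cancel₀ (RS.qPochInf_ne q q hq hq) h1
  rw [← h2]
  refine tsum_congr fun j => ?_
  simp only [RS.ss, add_zero]
end
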